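/- arXiv:1906.11073 — 4 statements merged into one kernel-verified Lean document; each statement's English description precedes it below -/
import Mathlib

section
/- Bound on the mixed Gaussian–algebraic convolution integral IV_j. Let M > 0, c₁, c₂ ∈ ℝ with c₁ ≠ c₂, r ≥ 3 and j ∈ {0,1}. Then there exists a constant C > 0 such that for every x ∈ ℝ and every t ≥ 0: ∫_0^t ∫_ℝ exp( −4(x−y+c₁(t−s))²/(M(t−s)) − (y+c₂s)²/(M(1+s)) ) / ( √(1+s) (1 + |y+c₁s| + √s)^r (t−s)^{(1+j)/2} ) dy ds ≤ C [ (1 + |x+c₁t| + √t)^{−r} + e^{−(x+c₁t)²/(M(1+t))}/√(1+t) ]. -/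
open MeasureTheory Set

noncomputable section

/-!
With `X = x + c₁ t`, the `y`-integrand is a product of two heat kernels, of squared widths
`M (t - s) / 4` and `M (1 + s)`, and an algebraic factor depending on `X - u`, where `u` is the
argument of the first kernel. Write `exp (-4u²/Mτ) = exp (-u²/Mτ) exp (-3u²/Mτ)`, `τ = t - s`.
Either the algebraic factor already decays in `X`, or `X² ≤ 1 + t`, or `u` is comparable to `X` and
`3u² ≥ X²`; in the last two cases `exp (-3u²/Mτ)` is bounded by a multiple of
`exp (-X²/M(1 + t))`. The remaining heat kernels convolve to the heat kernel of squared width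
`M (1 + t)` centred on a point that drifts with speed `c₁ - c₂` in `s`. Hence the `s`-integrand is
`(t - s)^(-j/2)` times bounded weights which are integrable uniformly in `x` and `t`:
`(1 + s)^(-r/2)` because `r > 2`, and the drifting kernel because `c₁ ≠ c₂`. The singularity at
`s = t` only matters on an interval of length one, where the weights are bounded.
-/

/-- The self-similar profile of a diffusion wave of width `√T`, normalised so that its mass `√(π M)`
does not depend on `T`; for `T ≤ 0` it is the junk value `0`. -/
def gaussianProfile (M T X : ℝ) : ℝ :=
  Real.exp (-X ^ 2 / (M * T)) / √T

/-- The algebraically decaying profile, of order `r`, of the template functions at time `t`. -/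
def algebraicProfile (r t X : ℝ) : ℝ :=
  (1 + |X| + √t) ^ (-r)

/-- The integrand of `IV_j`, for a real parameter `j`, at the intermediate time `s` and position
`y`. -/
def mixedIntegrand (M c₁ c₂ r j x t s y : ℝ) : ℝ :=
  Real.exp (-(4 * (x - y + c₁ * (t - s)) ^ 2) / (M * (t - s)) -
      (y + c₂ * s) ^ 2 / (M * (1 + s))) /
    (√(1 + s) * (1 + |y + c₁ * s| + √s) ^ r * (t - s) ^ ((1 + j) / 2))

section Gaussian

lemma gaussianProfile_nonneg (M T X : ℝ) : 0 ≤ gaussianProfile M T X := by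
  unfold gaussianProfile
  positivity

lemma gaussianProfile_le_one {M T : ℝ} (hM : 0 ≤ M) (hT : 1 ≤ T) (X : ℝ) :
    gaussianProfile M T X ≤ 1 := by
  refine div_le_one_of_le₀ (le_trans ?_ (Real.one_le_sqrt.mpr hT)) (Real.sqrt_nonneg T)
  exact Real.exp_le_one_iff.mpr
    (div_nonpos_of_nonpos_of_nonneg (neg_nonpos.mpr (sq_nonneg X)) (by positivity))

lemma gaussianProfile_eq (M T X : ℝ) :
    gaussianProfile M T X = Real.exp (-(M * T)⁻¹ * X ^ 2) / √T := by
  unfold gaussianProfile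
  congr 2
  ring

lemma gaussianProfile_div_four (M T X : ℝ) :
    gaussianProfile (M / 4) T X = Real.exp (-(4 * X ^ 2) / (M * T)) / √T := by
  rw [gaussianProfile, div_mul_eq_mul_div, div_div_eq_mul_div, neg_mul, mul_comm (X ^ 2)]

lemma gaussianProfile_mul_exp_le {M T : ℝ} (hM : 0 ≤ M) (hT : 0 ≤ T) (X Y : ℝ) :
    gaussianProfile M T Y * Real.exp (-X ^ 2 / (M * T)) ≤ gaussianProfile M T X := by
  rw [gaussianProfile, gaussianProfile, div_mul_eq_mul_div]
  gcongr
  exact mul_le_of_le_one_left (Real.exp_pos _).le (Real.exp_le_one_iff.mpr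
    (div_nonpos_of_nonpos_of_nonneg (neg_nonpos.mpr (sq_nonneg Y)) (by positivity)))

lemma integrable_gaussianProfile {M T : ℝ} (hM : 0 < M) (hT : 0 < T) :
    Integrable (gaussianProfile M T) := by
  simp_rw [funext (gaussianProfile_eq M T)]
  exact (integrable_exp_neg_mul_sq (by positivity)).div_const _

lemma integral_gaussianProfile {T : ℝ} (hT : 0 < T) (M : ℝ) :
    ∫ X, gaussianProfile M T X = √(Real.pi * M) := by
  simp_rw [gaussianProfile_eq]
  rw [integral_div, integral_gaussian, div_inv_eq_mul, ← mul_assoc, Real.sqrt_mul' _ hT.le,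
    mul_div_cancel_right₀ _ (Real.sqrt_pos.mpr hT).ne']

lemma integrable_gaussianProfile_sub_mul {M T a : ℝ} (hM : 0 < M) (hT : 0 < T) (ha : a ≠ 0)
    (X : ℝ) :
    Integrable fun s ↦ gaussianProfile M T (X - a * s) :=
  ((integrable_gaussianProfile hM hT).comp_sub_left X).comp_mul_left' ha

lemma integral_gaussianProfile_sub_mul {T : ℝ} (hT : 0 < T) (M a X : ℝ) :
    ∫ s, gaussianProfile M T (X - a * s) = |a⁻¹| * √(Real.pi * M) := by
  rw [Measure.integral_comp_mul_left (fun u ↦ gaussianProfile M T (X - u)),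
    integral_sub_left_eq_self, integral_gaussianProfile hT, smul_eq_mul]

variable {τ σ : ℝ} (hτ : 0 < τ) (hσ : 0 < σ) (p b : ℝ)
include hτ hσ

lemma gaussianProfile_mul_gaussianProfile (M y : ℝ) :
    gaussianProfile M τ (p - y) * gaussianProfile M σ (y - b) =
      gaussianProfile M (τ + σ) (p - b) *
        gaussianProfile M (τ * σ / (τ + σ)) (y - (σ * p + τ * b) / (τ + σ)) := by
  have hsqrt : √τ * √σ = √(τ + σ) * √(τ * σ / (τ + σ)) := by
    rw [← Real.sqrt_mul hτ.le, ← Real.sqrt_mul (by positivity), mul_div_cancel₀ _ (by positivity)]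
  unfold gaussianProfile
  rw [div_mul_div_comm, div_mul_div_comm, ← Real.exp_add, ← Real.exp_add, hsqrt]
  congr 2 -- what remains is the completion of the square in `y`
  rcases eq_or_ne M 0 with rfl | hM
  · simp
  field_simp
  ring

lemma integrable_gaussianProfile_mul_gaussianProfile {M : ℝ} (hM : 0 < M) :
    Integrable fun y ↦ gaussianProfile M τ (p - y) * gaussianProfile M σ (y - b) := by
  simp_rw [gaussianProfile_mul_gaussianProfile hτ hσ p b]
  exact ((integrable_gaussianProfile hM (by positivity)).comp_sub_right _).const_mul _

lemma integral_gaussianProfile_mul_gaussianProfile (M : ℝ) :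
    ∫ y, gaussianProfile M τ (p - y) * gaussianProfile M σ (y - b) =
      √(Real.pi * M) * gaussianProfile M (τ + σ) (p - b) := by
  simp_rw [gaussianProfile_mul_gaussianProfile hτ hσ p b]
  rw [integral_const_mul, integral_sub_right_eq_self (gaussianProfile M _),
    integral_gaussianProfile (by positivity), mul_comm]

end Gaussian

section Algebraic

variable {r s t : ℝ}

lemma algebraicProfile_nonneg (r t X : ℝ) : 0 ≤ algebraicProfile r t X := by
  unfold algebraicProfile
  positivity

lemma algebraicProfile_le_of_le_mul {X Y c : ℝ} (hr : 0 ≤ r) (hc : 0 < c)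
    (h : 1 + |Y| + √t ≤ c * (1 + |X| + √s)) :
    algebraicProfile r s X ≤ c ^ r * algebraicProfile r t Y := by
  have hbase : (1 + |Y| + √t) / c ≤ 1 + |X| + √s := (div_le_iff₀' hc).mpr h
  calc algebraicProfile r s X ≤ ((1 + |Y| + √t) / c) ^ (-r) :=
        Real.rpow_le_rpow_of_nonpos (by positivity) hbase (neg_nonpos.mpr hr)
    _ = c ^ r * algebraicProfile r t Y := by
        rw [Real.div_rpow (by positivity) hc.le, Real.rpow_neg hc.le, div_inv_eq_mul, mul_comm,
          algebraicProfile]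

lemma algebraicProfile_anti_time (hr : 0 ≤ r) (hst : s ≤ t) (X : ℝ) :
    algebraicProfile r t X ≤ algebraicProfile r s X := by
  simpa using algebraicProfile_le_of_le_mul hr one_pos
    (by linarith [Real.sqrt_le_sqrt hst] : 1 + |X| + √s ≤ 1 * (1 + |X| + √t))

lemma algebraicProfile_le_one_add_rpow_neg (hr : 0 ≤ r) (ht : 0 ≤ t) (X : ℝ) :
    algebraicProfile r t X ≤ (1 + t) ^ (-(r / 2)) := by
  have hbase : 1 + t ≤ (1 + |X| + √t) ^ 2 := by
    nlinarith [Real.sq_sqrt ht, Real.sqrt_nonneg t, abs_nonneg X,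
      mul_nonneg (abs_nonneg X) (Real.sqrt_nonneg t)]
  calc algebraicProfile r t X = ((1 + |X| + √t) ^ 2) ^ (-(r / 2)) := by
        rw [← Real.rpow_natCast, ← Real.rpow_mul (by positivity), algebraicProfile]
        congr 1
        push_cast
        ring
    _ ≤ (1 + t) ^ (-(r / 2)) :=
        Real.rpow_le_rpow_of_nonpos (by positivity) hbase (by linarith)

end Algebraic

lemma exp_neg_le_or_one_add_abs_add_sqrt_le {M τ T : ℝ} (hM : 0 < M) (hτ : 0 < τ)
    (hτT : τ ≤ T) (X u : ℝ) :
    Real.exp (-(3 * u ^ 2 / (M * τ))) ≤ Real.exp (1 / M) * Real.exp (-X ^ 2 / (M * T)) ∨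
      1 + |X| + √T ≤ 8 * (1 + |X - u|) := by
  have hT : 0 < T := hτ.trans_le hτT
  suffices X ^ 2 / (M * T) ≤ 1 / M + 3 * u ^ 2 / (M * τ) ∨ 1 + |X| + √T ≤ 8 * (1 + |X - u|) by
    refine this.imp_left fun h ↦ ?_
    rw [← Real.exp_add, Real.exp_le_exp, neg_div]
    linarith
  rcases le_total (X ^ 2) T with hXT | hTX
  · left
    have : X ^ 2 / (M * T) ≤ 1 / M := by
      rw [div_le_div_iff₀ (by positivity) hM]
      nlinarith
    exact le_add_of_le_of_nonneg this (by positivity)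
  rcases le_total |X - u| (|X| / 4) with hnear | hfar
  · left
    have hu : 3 / 4 * |X| ≤ |u| := by linarith [abs_sub_abs_le_abs_sub X u]
    have hsq : X ^ 2 ≤ 3 * u ^ 2 := by
      rw [← sq_abs X, ← sq_abs u]
      nlinarith [abs_nonneg X]
    exact le_add_of_nonneg_of_le (by positivity) (by gcongr)
  · right
    have hsqrt : √T ≤ |X| := Real.sqrt_le_iff.mpr ⟨abs_nonneg X, by rwa [sq_abs]⟩
    linarith

lemma gaussianProfile_div_four_mul_algebraicProfile_le {M τ T r : ℝ} (hM : 0 < M) (hτ : 0 < τ)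
    (hτT : τ ≤ T) (hr : 0 ≤ r) (s X u : ℝ) :
    gaussianProfile (M / 4) τ u * algebraicProfile r s (X - u) ≤
      gaussianProfile M τ u *
        (Real.exp (1 / M) * Real.exp (-X ^ 2 / (M * T)) * algebraicProfile r s 0 +
          8 ^ r * algebraicProfile r T X) := by
  have hsplit : gaussianProfile (M / 4) τ u =
      gaussianProfile M τ u * Real.exp (-(3 * u ^ 2 / (M * τ))) := by
    rw [gaussianProfile_div_four, gaussianProfile, div_mul_eq_mul_div, ← Real.exp_add]
    congr 2
    ring
  rw [hsplit, mul_assoc]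
  refine mul_le_mul_of_nonneg_left ?_ (gaussianProfile_nonneg M τ u)
  have hS := algebraicProfile_nonneg r s 0
  have hR := algebraicProfile_nonneg r T X
  rcases exp_neg_le_or_one_add_abs_add_sqrt_le hM hτ hτT X u with hexp | halg
  · refine le_add_of_le_of_nonneg ?_ (by positivity)
    refine mul_le_mul hexp ?_ (algebraicProfile_nonneg r s _) (by positivity)
    simpa using algebraicProfile_le_of_le_mul hr one_pos
      (by simp : 1 + |(0 : ℝ)| + √s ≤ 1 * (1 + |X - u| + √s))
  · refine le_add_of_nonneg_of_le (by positivity) ?_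
    calc Real.exp (-(3 * u ^ 2 / (M * τ))) * algebraicProfile r s (X - u)
        ≤ algebraicProfile r s (X - u) :=
          mul_le_of_le_one_left (algebraicProfile_nonneg r s _)
            (Real.exp_le_one_iff.mpr (neg_nonpos.mpr (by positivity)))
      _ ≤ 8 ^ r * algebraicProfile r T X :=
          algebraicProfile_le_of_le_mul hr (by norm_num) (by linarith [Real.sqrt_nonneg s])

lemma integral_gaussianProfile_mul_algebraicProfile_le {M r τ σ : ℝ} (hM : 0 < M) (hr : 0 ≤ r)
    (hτ : 0 < τ) (hσ : 0 < σ) (s X p b : ℝ) :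
    ∫ y, gaussianProfile (M / 4) τ (p - y) * gaussianProfile M σ (y - b) *
        algebraicProfile r s (X - (p - y)) ≤
      √(Real.pi * M) * gaussianProfile M (τ + σ) (p - b) *
        (Real.exp (1 / M) * Real.exp (-X ^ 2 / (M * (τ + σ))) * algebraicProfile r s 0 +
          8 ^ r * algebraicProfile r (τ + σ) X) := by
  set L := Real.exp (1 / M) * Real.exp (-X ^ 2 / (M * (τ + σ))) * algebraicProfile r s 0 +
    8 ^ r * algebraicProfile r (τ + σ) X
  rw [← integral_gaussianProfile_mul_gaussianProfile hτ hσ, ← integral_mul_const]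
  refine integral_mono_of_nonneg (ae_of_all _ fun y ↦ ?_)
    ((integrable_gaussianProfile_mul_gaussianProfile hτ hσ p b hM).mul_const L)
    (ae_of_all _ fun y ↦ ?_)
  · exact mul_nonneg (mul_nonneg (gaussianProfile_nonneg _ _ _) (gaussianProfile_nonneg _ _ _))
      (algebraicProfile_nonneg _ _ _)
  · dsimp only
    rw [mul_right_comm, mul_right_comm _ _ L]
    exact mul_le_mul_of_nonneg_right (gaussianProfile_div_four_mul_algebraicProfile_le hM hτ
      (le_add_of_nonneg_right hσ.le) hr s X (p - y)) (gaussianProfile_nonneg _ _ _)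

lemma integral_gaussianProfile_mul_algebraicProfile_le_of_lt {M r s t : ℝ} (hM : 0 < M)
    (hr : 0 ≤ r) (hs : 0 ≤ s) (hst : s < t) (X p b : ℝ) :
    ∫ y, gaussianProfile (M / 4) (t - s) (p - y) * gaussianProfile M (1 + s) (y - b) *
        algebraicProfile r s (X - (p - y)) ≤
      √(Real.pi * M) * (Real.exp (1 / M) + 8 ^ r) *
        (gaussianProfile M (1 + t) X * (1 + s) ^ (-(r / 2)) +
          algebraicProfile r t X * gaussianProfile M (1 + t) (p - b)) := by
  have hT : 0 ≤ 1 + t := by linarith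
  have hsum : t - s + (1 + s) = 1 + t := by ring
  have hbound := integral_gaussianProfile_mul_algebraicProfile_le hM hr (sub_pos.mpr hst)
    (by linarith : 0 < 1 + s) s X p b
  rw [hsum] at hbound
  have hgauss := gaussianProfile_mul_exp_le hM.le hT X (p - b)
  have hg := gaussianProfile_nonneg M (1 + t) X
  have hg' := gaussianProfile_nonneg M (1 + t) (p - b)
  have ha := algebraicProfile_nonneg r s 0
  have ha' := algebraicProfile_nonneg r (1 + t) X
  refine hbound.trans ?_
  calc √(Real.pi * M) * gaussianProfile M (1 + t) (p - b) *
        (Real.exp (1 / M) * Real.exp (-X ^ 2 / (M * (1 + t))) * algebraicProfile r s 0 +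
          8 ^ r * algebraicProfile r (1 + t) X)
      = √(Real.pi * M) * (Real.exp (1 / M) * (gaussianProfile M (1 + t) (p - b) *
          Real.exp (-X ^ 2 / (M * (1 + t))) * algebraicProfile r s 0) +
          8 ^ r * (algebraicProfile r (1 + t) X * gaussianProfile M (1 + t) (p - b))) := by ring
    _ ≤ √(Real.pi * M) * ((Real.exp (1 / M) + 8 ^ r) *
          (gaussianProfile M (1 + t) X * (1 + s) ^ (-(r / 2))) +
          (Real.exp (1 / M) + 8 ^ r) *
            (algebraicProfile r t X * gaussianProfile M (1 + t) (p - b))) := by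
        gcongr
        · exact le_add_of_nonneg_right (by positivity)
        · exact algebraicProfile_le_one_add_rpow_neg hr hs 0
        · exact le_add_of_nonneg_left (by positivity)
        · exact algebraicProfile_anti_time hr (by linarith) X
    _ = _ := by ring

section AbelKernel

lemma integrable_indicator_sub_rpow_neg {β : ℝ} (hβ : β < 1) (t : ℝ) :
    Integrable ((Ioc (t - 1) t).indicator fun s ↦ (t - s) ^ (-β)) := by
  have h := (intervalIntegral.intervalIntegrable_rpow' (a := 0) (b := 1)
    (by linarith : -1 < -β)).comp_sub_left t
  rw [sub_zero] at h
  rw [integrable_indicator_iff measurableSet_Ioc]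
  exact (intervalIntegrable_iff_integrableOn_Ioc_of_le (by linarith)).mp h.symm

lemma integral_indicator_sub_rpow_neg {β : ℝ} (hβ : β < 1) (t : ℝ) :
    ∫ s, (Ioc (t - 1) t).indicator (fun s ↦ (t - s) ^ (-β)) s = 1 / (1 - β) := by
  have hβ' : -β + 1 ≠ 0 := by linarith
  rw [integral_indicator measurableSet_Ioc, ← intervalIntegral.integral_of_le (by linarith),
    intervalIntegral.integral_comp_sub_left (fun u ↦ u ^ (-β)), sub_self, sub_sub_cancel,
    integral_rpow (Or.inl (by linarith)), Real.one_rpow, Real.zero_rpow hβ', sub_zero,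
    neg_add_eq_sub]

lemma setIntegral_Ioo_le_of_le_sub_rpow_neg_mul {β a t B : ℝ} {f w : ℝ → ℝ} (hβ₀ : 0 ≤ β)
    (hβ₁ : β < 1) (hw : Integrable w) (hw₀ : ∀ s, 0 ≤ w s) (hwB : ∀ s, w s ≤ B)
    (hf₀ : ∀ s ∈ Ioo a t, 0 ≤ f s) (hf : ∀ s ∈ Ioo a t, f s ≤ (t - s) ^ (-β) * w s) :
    ∫ s in Ioo a t, f s ≤ (∫ s, w s) + B / (1 - β) := by
  set k : ℝ → ℝ := (Ioc (t - 1) t).indicator fun s ↦ (t - s) ^ (-β)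
  have hB : 0 ≤ B := (hw₀ 0).trans (hwB 0)
  have hk₀ : ∀ s, 0 ≤ k s :=
    indicator_nonneg fun s hs ↦ Real.rpow_nonneg (sub_nonneg.mpr hs.2) _
  have hk_int : Integrable k := integrable_indicator_sub_rpow_neg hβ₁ t
  have hmajor : Integrable fun s ↦ w s + B * k s := hw.add (hk_int.const_mul B)
  have hle : ∀ s ∈ Ioo a t, f s ≤ w s + B * k s := by
    intro s hs
    refine (hf s hs).trans ?_
    by_cases hclose : t - 1 < s
    · have hks : k s = (t - s) ^ (-β) :=
        indicator_of_mem (show s ∈ Ioc (t - 1) t from ⟨hclose, hs.2.le⟩) _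
      rw [hks, mul_comm]
      exact le_add_of_nonneg_of_le (hw₀ s)
        (mul_le_mul_of_nonneg_right (hwB s) (Real.rpow_nonneg (sub_nonneg.mpr hs.2.le) _))
    · refine le_add_of_le_of_nonneg (mul_le_of_le_one_left (hw₀ s) ?_) (mul_nonneg hB (hk₀ s))
      exact Real.rpow_le_one_of_one_le_of_nonpos (by linarith) (neg_nonpos.mpr hβ₀)
  calc ∫ s in Ioo a t, f s ≤ ∫ s in Ioo a t, (w s + B * k s) :=
        integral_mono_of_nonneg (ae_restrict_of_forall_mem measurableSet_Ioo hf₀)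
          hmajor.integrableOn (ae_restrict_of_forall_mem measurableSet_Ioo hle)
    _ ≤ ∫ s, (w s + B * k s) := setIntegral_le_integral hmajor
        (ae_of_all _ fun s ↦ add_nonneg (hw₀ s) (mul_nonneg hB (hk₀ s)))
    _ = (∫ s, w s) + B / (1 - β) := by
        rw [integral_add hw (hk_int.const_mul B), integral_const_mul,
          integral_indicator_sub_rpow_neg hβ₁, mul_one_div]

lemma setIntegral_Ioo_le_of_le_sub_rpow_neg_mul_add {β a t P Q : ℝ} {f v w : ℝ → ℝ}
    (hβ₀ : 0 ≤ β) (hβ₁ : β < 1) (hP : 0 ≤ P) (hQ : 0 ≤ Q) (hv : Integrable v) (hw : Integrable w)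
    (hv₀ : ∀ s, 0 ≤ v s) (hv₁ : ∀ s, v s ≤ 1) (hw₀ : ∀ s, 0 ≤ w s) (hw₁ : ∀ s, w s ≤ 1)
    (hf₀ : ∀ s ∈ Ioo a t, 0 ≤ f s)
    (hf : ∀ s ∈ Ioo a t, f s ≤ (t - s) ^ (-β) * (P * v s + Q * w s)) :
    ∫ s in Ioo a t, f s ≤ ((∫ s, v s) + (∫ s, w s) + 1 / (1 - β)) * (Q + P) := by
  have hV : 0 ≤ ∫ s, v s := integral_nonneg hv₀
  have hW : 0 ≤ ∫ s, w s := integral_nonneg hw₀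
  calc ∫ s in Ioo a t, f s ≤ (∫ s, (P * v s + Q * w s)) + (P + Q) / (1 - β) :=
        setIntegral_Ioo_le_of_le_sub_rpow_neg_mul hβ₀ hβ₁ ((hv.const_mul P).add (hw.const_mul Q))
          (fun s ↦ add_nonneg (mul_nonneg hP (hv₀ s)) (mul_nonneg hQ (hw₀ s)))
          (fun s ↦ add_le_add (mul_le_of_le_one_right hP (hv₁ s))
            (mul_le_of_le_one_right hQ (hw₁ s))) hf₀ hf
    _ = P * (∫ s, v s) + Q * (∫ s, w s) + (P + Q) / (1 - β) := by
        rw [integral_add (hv.const_mul P) (hw.const_mul Q), integral_const_mul, integral_const_mul]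
    _ ≤ P * ((∫ s, v s) + ∫ s, w s) + Q * ((∫ s, v s) + ∫ s, w s) + (P + Q) / (1 - β) := by
        gcongr
        · exact le_add_of_nonneg_right hW
        · exact le_add_of_nonneg_left hV
    _ = ((∫ s, v s) + (∫ s, w s) + 1 / (1 - β)) * (Q + P) := by ring

end AbelKernel

section MixedIntegrand

variable {s t : ℝ}

lemma mixedIntegrand_nonneg (hst : s ≤ t) (M c₁ c₂ r j x y : ℝ) :
    0 ≤ mixedIntegrand M c₁ c₂ r j x t s y := by
  have : 0 ≤ t - s := sub_nonneg.mpr hst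
  unfold mixedIntegrand
  positivity

lemma mixedIntegrand_eq (hst : s < t) (M c₁ c₂ r j x y : ℝ) :
    mixedIntegrand M c₁ c₂ r j x t s y =
      (t - s) ^ (-(j / 2)) *
        (gaussianProfile (M / 4) (t - s) (x + c₁ * (t - s) - y) *
          gaussianProfile M (1 + s) (y - -c₂ * s) *
          algebraicProfile r s (x + c₁ * t - (x + c₁ * (t - s) - y))) := by
  have hτ : 0 < t - s := sub_pos.mpr hst
  have hpow : (t - s) ^ ((1 + j) / 2) = √(t - s) * (t - s) ^ (j / 2) := by
    rw [Real.sqrt_eq_rpow, ← Real.rpow_add hτ, add_div]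
  have hexp : Real.exp (-(4 * (x - y + c₁ * (t - s)) ^ 2) / (M * (t - s)) -
        (y + c₂ * s) ^ 2 / (M * (1 + s))) =
      Real.exp (-(4 * (x + c₁ * (t - s) - y) ^ 2) / (M * (t - s))) *
        Real.exp (-(y - -c₂ * s) ^ 2 / (M * (1 + s))) := by
    rw [← Real.exp_add]
    congr 1
    ring
  have hposition : x + c₁ * t - (x + c₁ * (t - s) - y) = y + c₁ * s := by ring
  rw [mixedIntegrand, hpow, hexp, hposition, gaussianProfile_div_four, gaussianProfile,
    algebraicProfile, Real.rpow_neg hτ.le, Real.rpow_neg (by positivity)]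
  ring

lemma integral_mixedIntegrand_le {M r : ℝ} (hM : 0 < M) (hr : 0 ≤ r) (hs : 0 ≤ s) (hst : s < t)
    (c₁ c₂ j x : ℝ) :
    ∫ y, mixedIntegrand M c₁ c₂ r j x t s y ≤
      (t - s) ^ (-(j / 2)) * (√(Real.pi * M) * (Real.exp (1 / M) + 8 ^ r) *
        (gaussianProfile M (1 + t) (x + c₁ * t) * (1 + s) ^ (-(r / 2)) +
          algebraicProfile r t (x + c₁ * t) *
            gaussianProfile M (1 + t) (x + c₁ * t - (c₁ - c₂) * s))) := by
  have hdrift : x + c₁ * t - (c₁ - c₂) * s = x + c₁ * (t - s) - -c₂ * s := by ring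
  simp_rw [mixedIntegrand_eq hst]
  rw [integral_const_mul, hdrift]
  exact mul_le_mul_of_nonneg_left
    (integral_gaussianProfile_mul_algebraicProfile_le_of_lt hM hr hs hst _ _ _)
    (Real.rpow_nonneg (sub_pos.mpr hst).le _)

end MixedIntegrand

theorem bound_mixed_gaussian_algebraic_integral_general
    (M c₁ c₂ r j : ℝ) (hM : 0 < M) (hc : c₁ ≠ c₂) (hr : 2 < r) (hj₀ : 0 ≤ j) (hj₂ : j < 2) :
    ∃ C : ℝ, 0 < C ∧ ∀ x t : ℝ, 0 ≤ t →
      ∫ s in Ioo 0 t, ∫ y, mixedIntegrand M c₁ c₂ r j x t s y ≤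
        C * (algebraicProfile r t (x + c₁ * t) + gaussianProfile M (1 + t) (x + c₁ * t)) := by
  set K := √(Real.pi * M) * (Real.exp (1 / M) + 8 ^ r)
  set I := ∫ s : ℝ, (1 + ‖s‖) ^ (-(r / 2))
  have hK : 0 < K := by positivity
  have : 0 ≤ I := integral_nonneg fun s ↦ by positivity
  have hβ : 0 < 1 - j / 2 := by linarith
  refine ⟨(I + |(c₁ - c₂)⁻¹| * √(Real.pi * M) + 1 / (1 - j / 2)) * K, by positivity,
    fun x t ht ↦ ?_⟩
  have hT : 0 < 1 + t := by linarith
  rw [mul_assoc, mul_add K, ← integral_gaussianProfile_sub_mul hT M _ (x + c₁ * t)]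
  refine setIntegral_Ioo_le_of_le_sub_rpow_neg_mul_add (by linarith) (by linarith)
    (mul_nonneg hK.le (gaussianProfile_nonneg _ _ _))
    (mul_nonneg hK.le (algebraicProfile_nonneg _ _ _))
    (integrable_one_add_norm (by rw [Module.finrank_self, Nat.cast_one]; linarith))
    (integrable_gaussianProfile_sub_mul hM hT (sub_ne_zero.mpr hc) _)
    (fun s ↦ by positivity)
    (fun s ↦ Real.rpow_le_one_of_one_le_of_nonpos (by simp) (by linarith))
    (fun s ↦ gaussianProfile_nonneg _ _ _)
    (fun s ↦ gaussianProfile_le_one hM.le (by linarith) _)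
    (fun s hs ↦ integral_nonneg fun y ↦ mixedIntegrand_nonneg hs.2.le _ _ _ _ _ _ _)
    (fun s hs ↦ ?_)
  rw [mul_assoc K, mul_assoc K, ← mul_add, Real.norm_of_nonneg hs.1.le]
  exact integral_mixedIntegrand_le hM (by linarith) hs.1.le hs.2 c₁ c₂ j x

/-- Bound on the mixed Gaussian–algebraic convolution integral `IV_j`
(estimate (4.18) of the paper). -/
theorem bound_mixed_gaussian_algebraic_integral
    (M c₁ c₂ r : ℝ) (hM : 0 < M) (hc : c₁ ≠ c₂) (hr : 3 ≤ r)
    (j : ℕ) (hj : j = 0 ∨ j = 1) :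
    ∃ C : ℝ, 0 < C ∧ ∀ x t : ℝ, 0 ≤ t →
      (∫ s in Set.Ioo (0 : ℝ) t, ∫ y : ℝ,
          Real.exp (-(4 * (x - y + c₁ * (t - s)) ^ 2) / (M * (t - s)) -
              (y + c₂ * s) ^ 2 / (M * (1 + s))) /
            (Real.sqrt (1 + s) * (1 + |y + c₁ * s| + Real.sqrt s) ^ r *
              (t - s) ^ ((1 + (j : ℝ)) / 2))) ≤
        C * ((1 + |x + c₁ * t| + Real.sqrt t) ^ (-r) +
          Real.exp (-(x + c₁ * t) ^ 2 / (M * (1 + t))) / Real.sqrt (1 + t)) := by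
  exact bound_mixed_gaussian_algebraic_integral_general M c₁ c₂ r j hM hc (by linarith)
    j.cast_nonneg (by rcases hj with rfl | rfl <;> norm_num)
end
end

section
/- Bound on the triple mix-term integral J₆. Let M > 0 and c₁, c₂ ∈ ℝ with c₁ ≠ c₂. Then there exists a constant C > 0 such that for every x ∈ ℝ and every t ≥ 0: ∫_0^t ∫_0^s ∫_ℝ exp( −2(x−y+c₁(t−s))²/(M(t−s)) − (y+c₁s)²/(M(1+s)) − (y + c₂s + r(c₁−c₂))²/(M(1+s)) ) / ( (1+s) √(t−s) (1+r) ) · ( (1+r)^{1/4}/√r + 1/√(s−r) ) dy dr ds ≤ C e^{−(x+c₁t)²/(M(1+t))} / √(1+t). -/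
open MeasureTheory Set

noncomputable section

/-! Integrating over `y` completes a square: with `κ = (c₁ - c₂)² / M`, `u = s - r` and
`ξ = (x + c₁ t) / (c₁ - c₂)`, the `y`-integral is the product of the target
`exp (-(x + c₁ t)² / (M (1 + t))) / √(1 + t)` and a kernel in `r` and `u` in which `x`, `c₁` and
`c₂` occur only through `κ` and `ξ`. It remains to bound the integral of this kernel over
`0 < r < s < t` uniformly in `ξ` and `t`, which is done by majorizing it by a sum
`∑ᵢ fᵢ(r) gᵢ(s - r)`, whose integral over the triangle is at most `∑ᵢ (∫ fᵢ) (∫ gᵢ)`.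

When `2 (1 + s) ≤ 1 + t`, the kernel contains a factor at most `exp (-κ u² / (4 (1 + s)))`, which
trades powers of `1 + s` for powers of `1 + u`. When `2 (1 + s) ≥ 1 + t`, we have
`1 / √(1 + s) ≲ 1 / √(1 + t)`, which normalizes the Gaussian of width `√(1 + t)` in `u` centred
at `ξ`; the remaining contribution `1 / ((1 + r) √u)` is dominated by a function of `r` if
`1 + r ≤ u`, and otherwise `1 + r ≳ 1 + t`. -/

theorem setIntegral_setIntegral_le_integral_prod {α β : Type*} [MeasurableSpace α]
    [MeasurableSpace β] {μ : Measure α} {ν : Measure β} [SFinite μ] [SFinite ν]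
    {S : Set α} {T : α → Set β} (hS : MeasurableSet S) (hT : ∀ a, MeasurableSet (T a))
    {h : α → β → ℝ} {H : α × β → ℝ} (h_nonneg : ∀ a ∈ S, ∀ b ∈ T a, 0 ≤ h a b)
    (h_le : ∀ a ∈ S, ∀ b ∈ T a, h a b ≤ H (a, b)) (H_nonneg : 0 ≤ H)
    (H_int : Integrable H (μ.prod ν)) :
    ∫ a in S, ∫ b in T a, h a b ∂ν ∂μ ≤ ∫ p, H p ∂(μ.prod ν) := by
  have slice_le : ∀ᵐ a ∂μ.restrict S, ∫ b in T a, h a b ∂ν ≤ ∫ b, H (a, b) ∂ν := by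
    filter_upwards [ae_restrict_mem hS, ae_restrict_of_ae H_int.prod_right_ae] with a ha hHa
    calc ∫ b in T a, h a b ∂ν ≤ ∫ b in T a, H (a, b) ∂ν :=
          integral_mono_of_nonneg (ae_restrict_of_forall_mem (hT a) (h_nonneg a ha))
            hHa.integrableOn (ae_restrict_of_forall_mem (hT a) (h_le a ha))
      _ ≤ ∫ b, H (a, b) ∂ν := setIntegral_le_integral hHa (ae_of_all _ fun b ↦ H_nonneg (a, b))
  have slice_nonneg : ∀ᵐ a ∂μ.restrict S, 0 ≤ ∫ b in T a, h a b ∂ν :=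
    ae_restrict_of_forall_mem hS fun a ha ↦ setIntegral_nonneg (hT a) (h_nonneg a ha)
  calc ∫ a in S, ∫ b in T a, h a b ∂ν ∂μ ≤ ∫ a in S, ∫ b, H (a, b) ∂ν ∂μ :=
        integral_mono_of_nonneg slice_nonneg H_int.integral_prod_left.integrableOn slice_le
    _ ≤ ∫ a, ∫ b, H (a, b) ∂ν ∂μ :=
        setIntegral_le_integral H_int.integral_prod_left
          (ae_of_all _ fun a ↦ integral_nonneg fun b ↦ H_nonneg (a, b))
    _ = ∫ p, H p ∂(μ.prod ν) := (integral_prod H H_int).symm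

theorem integral_prod_mul_comp_sub {f g : ℝ → ℝ} (hf : Integrable f) (hg : Integrable g) :
    ∫ p : ℝ × ℝ, f p.2 * g (p.1 - p.2) = (∫ r, f r) * ∫ u, g u :=
  (integral_prod _ (hf.convolution_integrand (.mul ℝ ℝ) hg)).trans
    (integral_convolution (.mul ℝ ℝ) hf hg)

theorem integral_triangle_le_sum_integral_mul_integral {ι : Type*} [Fintype ι] {t : ℝ}
    {f g : ι → ℝ → ℝ} {h : ℝ → ℝ → ℝ}
    (hf : ∀ i, IntegrableOn (f i) (Ioo 0 t)) (hg : ∀ i, IntegrableOn (g i) (Ioo 0 t))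
    (hf_nonneg : ∀ i, ∀ r ∈ Ioo 0 t, 0 ≤ f i r) (hg_nonneg : ∀ i, ∀ u ∈ Ioo 0 t, 0 ≤ g i u)
    (h_nonneg : ∀ s ∈ Ioo 0 t, ∀ r ∈ Ioo 0 s, 0 ≤ h s r)
    (h_le : ∀ s ∈ Ioo 0 t, ∀ r ∈ Ioo 0 s, h s r ≤ ∑ i, f i r * g i (s - r)) :
    ∫ s in Ioo 0 t, ∫ r in Ioo 0 s, h s r ≤
      ∑ i, (∫ r in Ioo 0 t, f i r) * ∫ u in Ioo 0 t, g i u := by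
  let F i := (Ioo 0 t).indicator (f i)
  let G i := (Ioo 0 t).indicator (g i)
  have hF i : Integrable (F i) := (hf i).integrable_indicator measurableSet_Ioo
  have hG i : Integrable (G i) := (hg i).integrable_indicator measurableSet_Ioo
  have hFG i : Integrable fun p : ℝ × ℝ ↦ F i p.2 * G i (p.1 - p.2) :=
    (hF i).convolution_integrand (.mul ℝ ℝ) (hG i)
  calc ∫ s in Ioo 0 t, ∫ r in Ioo 0 s, h s r
      ≤ ∫ p : ℝ × ℝ, ∑ i, F i p.2 * G i (p.1 - p.2) := by
        refine setIntegral_setIntegral_le_integral_prod measurableSet_Ioo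
          (fun _ ↦ measurableSet_Ioo) h_nonneg (fun s hs r hr ↦ ?_) (fun p ↦ ?_)
          (integrable_finsetSum _ fun i _ ↦ hFG i)
        · have hr' : r ∈ Ioo 0 t := ⟨hr.1, hr.2.trans hs.2⟩
          have hu' : s - r ∈ Ioo 0 t := ⟨sub_pos.2 hr.2, by linarith [hr.1, hs.2]⟩
          simpa only [F, G, indicator_of_mem hr', indicator_of_mem hu'] using h_le s hs r hr
        · exact Finset.sum_nonneg fun i _ ↦ mul_nonneg
            (indicator_nonneg (hf_nonneg i) _) (indicator_nonneg (hg_nonneg i) _)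
    _ = ∑ i, (∫ r, F i r) * ∫ u, G i u := by
        rw [integral_finsetSum _ fun i _ ↦ hFG i]
        exact Finset.sum_congr rfl fun i _ ↦ integral_prod_mul_comp_sub (hF i) (hG i)
    _ = ∑ i, (∫ r in Ioo 0 t, f i r) * ∫ u in Ioo 0 t, g i u := by
        simp only [F, G, integral_indicator measurableSet_Ioo]

theorem inv_sqrt_eq_rpow {v : ℝ} (hv : 0 ≤ v) : (√v)⁻¹ = v ^ (-(1 / 2) : ℝ) := by
  rw [Real.sqrt_eq_rpow, Real.rpow_neg hv]

theorem integrableOn_inv_sqrt {t : ℝ} (ht : 0 ≤ t) :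
    IntegrableOn (fun u : ℝ ↦ (√u)⁻¹) (Ioo 0 t) :=
  ((intervalIntegrable_iff_integrableOn_Ioo_of_le ht).1
    (intervalIntegral.intervalIntegrable_rpow' (by norm_num))).congr_fun
    (fun _ hu ↦ (inv_sqrt_eq_rpow hu.1.le).symm) measurableSet_Ioo

theorem integral_inv_sqrt {t : ℝ} (ht : 0 ≤ t) : ∫ u in Ioo 0 t, (√u)⁻¹ = 2 * √t := by
  rw [setIntegral_congr_fun measurableSet_Ioo fun u hu ↦ inv_sqrt_eq_rpow hu.1.le,
    ← integral_Ioc_eq_integral_Ioo, ← intervalIntegral.integral_of_le ht,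
    integral_rpow (Or.inl (by norm_num)), Real.sqrt_eq_rpow]
  norm_num
  ring

/-- The weight `v ^ (-1/2) * (1 + v) ^ (-a)` on `v > 0`, the common majorant in `r` and `s - r`.
It has an inverse square root singularity at `0` and is integrable at infinity if `1/2 < a`. -/
def decayWeight (a v : ℝ) : ℝ := (√v)⁻¹ * (1 + v) ^ (-a)

theorem decayWeight_nonneg (a : ℝ) {v : ℝ} (hv : 0 ≤ v) : 0 ≤ decayWeight a v := by
  unfold decayWeight
  positivity

theorem decayWeight_antitone {v : ℝ} (hv : 0 ≤ v) : Antitone (decayWeight · v) := fun a b hab ↦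
  mul_le_mul_of_nonneg_left
    (Real.rpow_le_rpow_of_exponent_le (by linarith) (neg_le_neg hab)) (by positivity)

theorem decayWeight_mul_one_add_rpow (a b : ℝ) {v : ℝ} (hv : 0 ≤ v) :
    decayWeight a v * (1 + v) ^ b = decayWeight (a - b) v := by
  rw [decayWeight, decayWeight, mul_assoc, ← Real.rpow_add (by linarith), neg_sub, neg_add_eq_sub]

theorem one_add_rpow_le_decayWeight (a : ℝ) {v : ℝ} (hv : 0 < v) :
    (1 + v) ^ (-(a + 1 / 2)) ≤ decayWeight a v := by
  have h : (1 + v) ^ (-(1 / 2) : ℝ) ≤ (√v)⁻¹ := by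
    rw [inv_sqrt_eq_rpow hv.le]
    exact Real.rpow_le_rpow_of_nonpos hv (by linarith) (by norm_num)
  calc (1 + v) ^ (-(a + 1 / 2)) = (1 + v) ^ (-(1 / 2) : ℝ) * (1 + v) ^ (-a) := by
        rw [← Real.rpow_add (by linarith)]
        ring_nf
    _ ≤ decayWeight a v := by
        unfold decayWeight
        gcongr

theorem integrableOn_decayWeight {a : ℝ} (ha : 1 / 2 < a) :
    IntegrableOn (decayWeight a) (Ioi 0) := by
  have hcont : ContinuousOn (fun v : ℝ ↦ (1 + v) ^ (-a)) (Ici 0) :=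
    ContinuousOn.rpow_const (by fun_prop) fun v hv ↦ Or.inl (by linarith [mem_Ici.1 hv])
  have htop : (fun v : ℝ ↦ (1 + v) ^ (-a)) =O[Filter.atTop] (· ^ (-a)) := by
    refine Asymptotics.IsBigO.of_bound' ?_
    filter_upwards [Filter.eventually_gt_atTop 0] with v hv
    rw [Real.norm_of_nonneg (by positivity), Real.norm_of_nonneg (by positivity)]
    exact Real.rpow_le_rpow_of_nonpos hv (by linarith) (by linarith)
  have hzero : (fun v : ℝ ↦ (1 + v) ^ (-a)) =O[nhdsWithin 0 (Ioi 0)] (· ^ (-0 : ℝ)) := by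
    simp only [neg_zero, Real.rpow_zero]
    exact ((hcont 0 self_mem_Ici).mono Ioi_subset_Ici_self).isBigO_one ℝ
  refine (mellin_convergent_of_isBigO_scalar (s := 1 / 2)
    ((hcont.mono Ioi_subset_Ici_self).locallyIntegrableOn measurableSet_Ioi)
    htop ha hzero (by norm_num)).congr_fun (fun v hv ↦ ?_) measurableSet_Ioi
  rw [decayWeight, inv_sqrt_eq_rpow (le_of_lt hv)]
  norm_num

theorem setIntegral_decayWeight_le {a : ℝ} (ha : 1 / 2 < a) (t : ℝ) :
    ∫ v in Ioo 0 t, decayWeight a v ≤ ∫ v in Ioi 0, decayWeight a v :=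
  setIntegral_mono_set (integrableOn_decayWeight ha)
    (ae_restrict_of_forall_mem measurableSet_Ioi fun _ hv ↦ decayWeight_nonneg a (le_of_lt hv))
    Ioo_subset_Ioi_self.eventuallyLE

theorem exp_neg_mul_sq_div_one_add_le {c s u p : ℝ} (hc : 0 < c) (hs : 0 ≤ s) (hu : 0 ≤ u)
    (hp₀ : 0 ≤ p) (hp₁ : p ≤ 1) :
    Real.exp (-(c * (u ^ 2 / (1 + s)))) ≤
      2 * (1 + 1 / c) * ((1 + s) ^ p * (1 + u) ^ (-(2 * p))) := by
  set z := u ^ 2 / (1 + s) with hz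
  set q := (1 + u) ^ 2 / (1 + s) with hq
  have hz_nonneg : 0 ≤ z := by positivity
  have hqz : q ≤ 2 + 2 * z := by
    have : 2 + 2 * z = (2 * (1 + s) + 2 * u ^ 2) / (1 + s) := by rw [hz]; field_simp
    rw [this, hq]
    gcongr
    nlinarith [sq_nonneg (1 - u)]
  have hq_rpow : q ^ p = (1 + u) ^ (2 * p) / (1 + s) ^ p := by
    rw [hq, Real.div_rpow (by positivity) (by positivity), Real.rpow_mul (by positivity),
      Real.rpow_two]
  have hq_le : q ^ p ≤ 2 * (1 + 1 / c) * Real.exp (c * z) := by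
    calc q ^ p ≤ (2 + 2 * z) ^ p := by gcongr
      _ = (1 + (1 + 2 * z)) ^ p := by ring_nf
      _ ≤ 1 + p * (1 + 2 * z) := rpow_one_add_le_one_add_mul_self (by linarith) hp₀ hp₁
      _ ≤ 1 + 1 * (1 + 2 * z) := by gcongr
      _ = 2 * (1 + 1 / c * (c * z)) := by field_simp; ring
      _ ≤ 2 * (Real.exp (c * z) + 1 / c * Real.exp (c * z)) := by
        gcongr
        · exact Real.one_le_exp (by positivity)
        · linarith [Real.add_one_le_exp (c * z)]
      _ = 2 * (1 + 1 / c) * Real.exp (c * z) := by ring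
  rw [hq_rpow, div_le_iff₀ (by positivity)] at hq_le
  rw [Real.exp_neg, Real.rpow_neg (by positivity), inv_le_iff_one_le_mul₀ (Real.exp_pos _)]
  calc 1 = (1 + u) ^ (2 * p) * ((1 + u) ^ (2 * p))⁻¹ := by field_simp
    _ ≤ 2 * (1 + 1 / c) * Real.exp (c * z) * (1 + s) ^ p * ((1 + u) ^ (2 * p))⁻¹ := by gcongr
    _ = _ := by ring

theorem inv_sqrt_mul_exp_neg_le {c s u δ : ℝ} (hc : 0 < c) (hs : 0 ≤ s) (hu : 0 ≤ u)
    (hδ₀ : -(1 / 2) ≤ δ) (hδ₁ : δ ≤ 1 / 2) :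
    (√(1 + s))⁻¹ * Real.exp (-(c * (u ^ 2 / (1 + s)))) ≤
      2 * (1 + 1 / c) * ((1 + s) ^ δ * (1 + u) ^ (-(1 + 2 * δ))) := by
  calc (√(1 + s))⁻¹ * Real.exp (-(c * (u ^ 2 / (1 + s))))
      ≤ (1 + s) ^ (-(1 / 2) : ℝ) * (2 * (1 + 1 / c) *
          ((1 + s) ^ (δ + 1 / 2) * (1 + u) ^ (-(2 * (δ + 1 / 2))))) := by
        rw [inv_sqrt_eq_rpow (by linarith)]
        gcongr
        exact exp_neg_mul_sq_div_one_add_le hc hs hu (by linarith) (by linarith)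
    _ = 2 * (1 + 1 / c) * (((1 + s) ^ (-(1 / 2) : ℝ) * (1 + s) ^ (δ + 1 / 2)) *
          (1 + u) ^ (-(2 * (δ + 1 / 2)))) := by ring
    _ = 2 * (1 + 1 / c) * ((1 + s) ^ δ * (1 + u) ^ (-(1 + 2 * δ))) := by
        rw [← Real.rpow_add (by linarith)]
        ring_nf

theorem inv_sqrt_mul_decayWeight_mul_exp_neg_le {a c δ r u : ℝ} (hc : 0 < c) (hδ₀ : 0 ≤ δ)
    (hδ₁ : δ ≤ 1 / 2) (hr : 0 ≤ r) (hu : 0 ≤ u) :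
    (√(1 + (r + u)))⁻¹ * decayWeight a r * Real.exp (-(c * (u ^ 2 / (1 + (r + u))))) ≤
      2 * (1 + 1 / c) * (decayWeight (a - δ) r * (1 + u) ^ (-(1 + δ))) := by
  have hr_nonneg := decayWeight_nonneg a hr
  have hsplit : (1 + (r + u)) ^ δ ≤ (1 + r) ^ δ * (1 + u) ^ δ := by
    rw [← Real.mul_rpow (by positivity) (by positivity)]
    gcongr
    nlinarith [mul_nonneg hr hu]
  calc (√(1 + (r + u)))⁻¹ * decayWeight a r * Real.exp (-(c * (u ^ 2 / (1 + (r + u)))))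
      = decayWeight a r *
          ((√(1 + (r + u)))⁻¹ * Real.exp (-(c * (u ^ 2 / (1 + (r + u)))))) := by ring
    _ ≤ decayWeight a r * (2 * (1 + 1 / c) *
          (((1 + r) ^ δ * (1 + u) ^ δ) * (1 + u) ^ (-(1 + 2 * δ)))) := by
        grw [inv_sqrt_mul_exp_neg_le hc (add_nonneg hr hu) hu (by linarith) hδ₁, hsplit]
    _ = 2 * (1 + 1 / c) * ((decayWeight a r * (1 + r) ^ δ) *
          ((1 + u) ^ δ * (1 + u) ^ (-(1 + 2 * δ)))) := by ring
    _ = 2 * (1 + 1 / c) * (decayWeight (a - δ) r * (1 + u) ^ (-(1 + δ))) := by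
        rw [decayWeight_mul_one_add_rpow a δ hr, ← Real.rpow_add (by linarith)]
        ring_nf

theorem inv_sqrt_mul_inv_one_add_mul_exp_neg_le {c δ r u : ℝ} (hc : 0 < c) (hδ₀ : 0 ≤ δ)
    (hδ₁ : δ ≤ 1 / 2) (hr : 0 ≤ r) (hu : 0 ≤ u) :
    (√(1 + (r + u)))⁻¹ * ((1 + r)⁻¹ * (√u)⁻¹) * Real.exp (-(c * (u ^ 2 / (1 + (r + u))))) ≤
      2 * (1 + 1 / c) * ((1 + r) ^ (-(1 + δ)) * decayWeight (1 - 2 * δ) u) := by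
  have hmono : (1 + (r + u)) ^ (-δ) ≤ (1 + r) ^ (-δ) :=
    Real.rpow_le_rpow_of_nonpos (by linarith) (by linarith) (by linarith)
  calc (√(1 + (r + u)))⁻¹ * ((1 + r)⁻¹ * (√u)⁻¹) * Real.exp (-(c * (u ^ 2 / (1 + (r + u)))))
      = (1 + r)⁻¹ * (√u)⁻¹ *
          ((√(1 + (r + u)))⁻¹ * Real.exp (-(c * (u ^ 2 / (1 + (r + u)))))) := by ring
    _ ≤ (1 + r)⁻¹ * (√u)⁻¹ *
          (2 * (1 + 1 / c) * ((1 + r) ^ (-δ) * (1 + u) ^ (-(1 + 2 * -δ)))) := by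
        grw [inv_sqrt_mul_exp_neg_le (δ := -δ) hc (add_nonneg hr hu) hu (by linarith) (by linarith),
          hmono]
    _ = 2 * (1 + 1 / c) * (((1 + r) ^ (-1 : ℝ) * (1 + r) ^ (-δ)) *
          ((√u)⁻¹ * (1 + u) ^ (-(1 + 2 * -δ)))) := by
        rw [Real.rpow_neg_one]
        ring
    _ = 2 * (1 + 1 / c) * ((1 + r) ^ (-(1 + δ)) * decayWeight (1 - 2 * δ) u) := by
        rw [← Real.rpow_add (by linarith), decayWeight]
        ring_nf

theorem inv_one_add_mul_inv_sqrt_le {r u : ℝ} (hr : 0 < r) (hru : 1 + r ≤ u) :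
    (1 + r)⁻¹ * (√u)⁻¹ ≤ decayWeight 1 r := by
  calc (1 + r)⁻¹ * (√u)⁻¹ ≤ (1 + r)⁻¹ * (√(1 + r))⁻¹ := by gcongr
    _ = (1 + r) ^ (-(1 + 1 / 2) : ℝ) := by
        rw [inv_sqrt_eq_rpow (by linarith), ← Real.rpow_neg_one, ← Real.rpow_add (by linarith),
          neg_add]
    _ ≤ decayWeight 1 r := one_add_rpow_le_decayWeight 1 hr

theorem integrable_inv_sqrt_mul_exp_neg {b T : ℝ} (hb : 0 < b) (hT : 0 < T) (ξ : ℝ) :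
    Integrable fun u ↦ (√T)⁻¹ * Real.exp (-(b / T) * (u - ξ) ^ 2) :=
  ((integrable_exp_neg_mul_sq (div_pos hb hT)).comp_sub_right ξ).const_mul _

theorem integral_inv_sqrt_mul_exp_neg (b : ℝ) {T : ℝ} (hT : 0 < T) (ξ : ℝ) :
    ∫ u, (√T)⁻¹ * Real.exp (-(b / T) * (u - ξ) ^ 2) = √(Real.pi / b) := by
  rw [integral_const_mul, integral_sub_right_eq_self (fun u ↦ Real.exp (-(b / T) * u ^ 2)) ξ,
    integral_gaussian, div_div_eq_mul_div, mul_comm Real.pi, mul_div_assoc, Real.sqrt_mul hT.le,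
    inv_mul_cancel_left₀ (Real.sqrt_ne_zero'.2 hT)]

theorem setIntegral_inv_sqrt_mul_exp_neg_le {b T : ℝ} (hb : 0 < b) (hT : 0 < T) (ξ : ℝ)
    (S : Set ℝ) :
    ∫ u in S, (√T)⁻¹ * Real.exp (-(b / T) * (u - ξ) ^ 2) ≤ √(Real.pi / b) :=
  (setIntegral_le_integral (integrable_inv_sqrt_mul_exp_neg hb hT ξ)
    (ae_of_all _ fun _ ↦ by positivity)).trans_eq (integral_inv_sqrt_mul_exp_neg b hT ξ)

/-- What is left of the integrand of `J₆` after integrating over `y`, in the variables `r` and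
`u = s - r`, and after dividing by `√(π M / 2) * exp (-(x + c₁ t)² / (M (1 + t))) / √(1 + t)`. The
parameters stand for `κ = (c₁ - c₂)² / M` and `ξ = (x + c₁ t) / (c₁ - c₂)`. -/
def reducedKernel (κ ξ t r u : ℝ) : ℝ :=
  (√(1 + (r + u)))⁻¹ * (decayWeight (3 / 4) r + (1 + r)⁻¹ * (√u)⁻¹) *
    Real.exp (-(κ * u ^ 2 * (t - (r + u)) / (2 * (1 + (r + u)) * (1 + t)))) *
    Real.exp (-(κ / (1 + t)) * (u - ξ) ^ 2)

theorem reducedKernel_nonneg (κ ξ t : ℝ) {r u : ℝ} (hr : 0 ≤ r) : 0 ≤ reducedKernel κ ξ t r u := by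
  have := decayWeight_nonneg (3 / 4) hr
  unfold reducedKernel
  positivity

theorem mul_sq_div_le_of_two_mul_le {κ s t u : ℝ} (hκ : 0 ≤ κ) (hs : 0 < 1 + s)
    (hst : 2 * (1 + s) ≤ 1 + t) :
    κ / 4 * (u ^ 2 / (1 + s)) ≤ κ * u ^ 2 * (t - s) / (2 * (1 + s) * (1 + t)) := by
  have hhalf : 1 / 2 ≤ (t - s) / (1 + t) := by
    rw [div_le_div_iff₀ two_pos (by linarith)]
    linarith
  calc κ / 4 * (u ^ 2 / (1 + s)) = κ * u ^ 2 / (2 * (1 + s)) * (1 / 2) := by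
        field_simp
        ring
    _ ≤ κ * u ^ 2 / (2 * (1 + s)) * ((t - s) / (1 + t)) := by gcongr
    _ = κ * u ^ 2 * (t - s) / (2 * (1 + s) * (1 + t)) := div_mul_div_comm _ _ _ _

section KernelBounds

variable {κ t r u : ℝ}

theorem reducedKernel_le_of_two_mul_le (hκ : 0 < κ) (ξ : ℝ) (hr : 0 < r) (hu : 0 < u)
    (hs : 2 * (1 + (r + u)) ≤ 1 + t) :
    reducedKernel κ ξ t r u ≤
      decayWeight (5 / 8) r * (4 * (1 + 4 / κ) * decayWeight (5 / 8) u) := by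
  have hr_nonneg (a : ℝ) := decayWeight_nonneg a hr.le
  have hu_nonneg (a : ℝ) := decayWeight_nonneg a hu.le
  have h1t : 0 < 1 + t := by linarith
  have hdamp := mul_sq_div_le_of_two_mul_le (u := u) hκ.le (by linarith) hs
  have hgauss : Real.exp (-(κ / (1 + t)) * (u - ξ) ^ 2) ≤ 1 :=
    Real.exp_le_one_iff.2 (by rw [neg_mul, neg_nonpos]; positivity)
  have hweight := inv_sqrt_mul_decayWeight_mul_exp_neg_le (a := 3 / 4) (c := κ / 4) (δ := 1 / 8)
    (by positivity) (by norm_num) (by norm_num) hr.le hu.le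
  have hsing := inv_sqrt_mul_inv_one_add_mul_exp_neg_le (c := κ / 4) (δ := 1 / 8)
    (by positivity) (by norm_num) (by norm_num) hr.le hu.le
  set E := Real.exp (-(κ / 4 * (u ^ 2 / (1 + (r + u)))))
  calc reducedKernel κ ξ t r u
      ≤ (√(1 + (r + u)))⁻¹ * (decayWeight (3 / 4) r + (1 + r)⁻¹ * (√u)⁻¹) * E * 1 := by
        have := hr_nonneg (3 / 4)
        unfold reducedKernel
        gcongr
        exact Real.exp_le_exp.2 (neg_le_neg hdamp)
    _ = (√(1 + (r + u)))⁻¹ * decayWeight (3 / 4) r * E +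
          (√(1 + (r + u)))⁻¹ * ((1 + r)⁻¹ * (√u)⁻¹) * E := by ring
    _ ≤ 2 * (1 + 1 / (κ / 4)) * (decayWeight (3 / 4 - 1 / 8) r * (1 + u) ^ (-(1 + 1 / 8) : ℝ)) +
          2 * (1 + 1 / (κ / 4)) *
            ((1 + r) ^ (-(1 + 1 / 8) : ℝ) * decayWeight (1 - 2 * (1 / 8)) u) :=
        add_le_add hweight hsing
    _ = 2 * (1 + 4 / κ) * (decayWeight (5 / 8) r * (1 + u) ^ (-(5 / 8 + 1 / 2) : ℝ)) +
          2 * (1 + 4 / κ) * ((1 + r) ^ (-(5 / 8 + 1 / 2) : ℝ) * decayWeight (3 / 4) u) := by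
        norm_num
    _ ≤ 2 * (1 + 4 / κ) * (decayWeight (5 / 8) r * decayWeight (5 / 8) u) +
          2 * (1 + 4 / κ) * (decayWeight (5 / 8) r * decayWeight (5 / 8) u) := by
        gcongr
        · exact hr_nonneg _
        · exact one_add_rpow_le_decayWeight _ hu
        · exact hu_nonneg _
        · exact hr_nonneg _
        · exact one_add_rpow_le_decayWeight _ hr
        · exact decayWeight_antitone hu.le (by norm_num)
    _ = decayWeight (5 / 8) r * (4 * (1 + 4 / κ) * decayWeight (5 / 8) u) := by ring

theorem inv_sqrt_le_of_le_two_mul {S T : ℝ} (hT : 0 < T) (hST : T ≤ 2 * S) :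
    (√S)⁻¹ ≤ 2 * (√T)⁻¹ := by
  have hle : √T ≤ 2 * √S := by
    rw [Real.sqrt_le_left (by positivity), mul_pow, Real.sq_sqrt (by linarith)]
    linarith
  rw [← div_eq_mul_inv, inv_eq_one_div, div_le_div_iff₀ (Real.sqrt_pos.2 (by linarith))
    (Real.sqrt_pos.2 hT), one_mul]
  exact hle

theorem inv_one_add_mul_inv_sqrt_mul_le {G : ℝ} (hr : 0 < r) (h1t : 0 < 1 + t)
    (hs : 1 + t ≤ 2 * (1 + (r + u))) (hG₀ : 0 ≤ G) (hG₁ : G ≤ 1) :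
    (1 + r)⁻¹ * (√u)⁻¹ * G ≤ decayWeight (5 / 8) r * G + 4 * ((1 + t)⁻¹ * (√u)⁻¹) := by
  have hr_nonneg := decayWeight_nonneg (5 / 8) hr.le
  rcases le_total (1 + r) u with hru | hur
  · calc (1 + r)⁻¹ * (√u)⁻¹ * G ≤ decayWeight (5 / 8) r * G := by
          gcongr
          exact (inv_one_add_mul_inv_sqrt_le hr hru).trans
            (decayWeight_antitone hr.le (by norm_num))
      _ ≤ _ := le_add_of_nonneg_right (by positivity)
  · have hinv : (1 + r)⁻¹ ≤ 4 * (1 + t)⁻¹ := by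
      rw [← div_eq_mul_inv, inv_eq_one_div, div_le_div_iff₀ (by positivity) h1t]
      linarith
    calc (1 + r)⁻¹ * (√u)⁻¹ * G ≤ 4 * (1 + t)⁻¹ * (√u)⁻¹ * 1 := by gcongr
      _ = 4 * ((1 + t)⁻¹ * (√u)⁻¹) := by ring
      _ ≤ _ := le_add_of_nonneg_left (by positivity)

theorem reducedKernel_le_of_le_two_mul (hκ : 0 < κ) (ξ : ℝ) (hr : 0 < r) (hu : 0 < u)
    (ht : r + u ≤ t) (hs : 1 + t ≤ 2 * (1 + (r + u))) :
    reducedKernel κ ξ t r u ≤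
      decayWeight (5 / 8) r * (4 * ((√(1 + t))⁻¹ * Real.exp (-(κ / (1 + t)) * (u - ξ) ^ 2))) +
        (1 + t)⁻¹ * (8 * ((√(1 + t))⁻¹ * (√u)⁻¹)) := by
  have h1t : 0 < 1 + t := by linarith
  have hr_nonneg (a : ℝ) := decayWeight_nonneg a hr.le
  have hdamp : Real.exp (-(κ * u ^ 2 * (t - (r + u)) / (2 * (1 + (r + u)) * (1 + t)))) ≤ 1 := by
    have := sub_nonneg.2 ht
    exact Real.exp_le_one_iff.2 (by rw [neg_nonpos]; positivity)
  have hgauss : Real.exp (-(κ / (1 + t)) * (u - ξ) ^ 2) ≤ 1 :=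
    Real.exp_le_one_iff.2 (by rw [neg_mul, neg_nonpos]; positivity)
  have hsing := inv_one_add_mul_inv_sqrt_mul_le hr h1t hs (Real.exp_nonneg _) hgauss
  unfold reducedKernel
  set G := Real.exp (-(κ / (1 + t)) * (u - ξ) ^ 2)
  calc _ ≤ 2 * (√(1 + t))⁻¹ * (decayWeight (5 / 8) r + (1 + r)⁻¹ * (√u)⁻¹) * 1 * G := by
        have := hr_nonneg (3 / 4)
        have := hr_nonneg (5 / 8)
        gcongr
        · exact inv_sqrt_le_of_le_two_mul h1t hs
        · exact decayWeight_antitone hr.le (by norm_num)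
    _ = 2 * (√(1 + t))⁻¹ * (decayWeight (5 / 8) r * G + (1 + r)⁻¹ * (√u)⁻¹ * G) := by ring
    _ ≤ 2 * (√(1 + t))⁻¹ * (decayWeight (5 / 8) r * G +
          (decayWeight (5 / 8) r * G + 4 * ((1 + t)⁻¹ * (√u)⁻¹))) := by gcongr
    _ = _ := by ring

theorem reducedKernel_le (hκ : 0 < κ) (ξ : ℝ) (hr : 0 < r) (hu : 0 < u) (ht : r + u ≤ t) :
    reducedKernel κ ξ t r u ≤
      decayWeight (5 / 8) r * (4 * (1 + 4 / κ) * decayWeight (5 / 8) u) +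
        decayWeight (5 / 8) r * (4 * ((√(1 + t))⁻¹ * Real.exp (-(κ / (1 + t)) * (u - ξ) ^ 2))) +
        (1 + t)⁻¹ * (8 * ((√(1 + t))⁻¹ * (√u)⁻¹)) := by
  have hr_nonneg := decayWeight_nonneg (5 / 8) hr.le
  have hu_nonneg := decayWeight_nonneg (5 / 8) hu.le
  have h1t : 0 < 1 + t := by linarith
  rw [add_assoc]
  rcases le_total (2 * (1 + (r + u))) (1 + t) with hs | hs
  · exact le_add_of_le_of_nonneg (reducedKernel_le_of_two_mul_le hκ ξ hr hu hs) (by positivity)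
  · exact le_add_of_nonneg_of_le (by positivity) (reducedKernel_le_of_le_two_mul hκ ξ hr hu ht hs)

end KernelBounds

theorem integral_inv_one_add_le_one {t : ℝ} (ht : 0 ≤ t) : ∫ _ in Ioo 0 t, (1 + t)⁻¹ ≤ 1 := by
  rw [setIntegral_const, Real.volume_real_Ioo_of_le ht, sub_zero, smul_eq_mul, ← div_eq_mul_inv,
    div_le_one (by linarith)]
  linarith

theorem integral_inv_sqrt_one_add_mul_inv_sqrt_le {t : ℝ} (ht : 0 ≤ t) :
    ∫ u in Ioo 0 t, (√(1 + t))⁻¹ * (√u)⁻¹ ≤ 2 := by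
  rw [integral_const_mul, integral_inv_sqrt ht, inv_mul_le_iff₀ (by positivity), mul_comm]
  gcongr
  linarith

theorem integral_reducedKernel_le_sum {κ t : ℝ} (hκ : 0 < κ) (ξ : ℝ) (ht : 0 ≤ t) :
    ∫ s in Ioo 0 t, ∫ r in Ioo 0 s, reducedKernel κ ξ t r (s - r) ≤
      (∫ r in Ioo 0 t, decayWeight (5 / 8) r) *
          (∫ u in Ioo 0 t, 4 * (1 + 4 / κ) * decayWeight (5 / 8) u) +
        (∫ r in Ioo 0 t, decayWeight (5 / 8) r) *
          (∫ u in Ioo 0 t, 4 * ((√(1 + t))⁻¹ * Real.exp (-(κ / (1 + t)) * (u - ξ) ^ 2))) +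
        (∫ _ in Ioo 0 t, (1 + t)⁻¹) * ∫ u in Ioo 0 t, 8 * ((√(1 + t))⁻¹ * (√u)⁻¹) := by
  have h1t : 0 < 1 + t := by linarith
  have hψ_nonneg : ∀ v ∈ Ioo 0 t, 0 ≤ decayWeight (5 / 8) v :=
    fun v hv ↦ decayWeight_nonneg _ hv.1.le
  have hψ_int : IntegrableOn (decayWeight (5 / 8)) (Ioo 0 t) :=
    (integrableOn_decayWeight (by norm_num)).mono_set Ioo_subset_Ioi_self
  let f : Fin 3 → ℝ → ℝ := ![decayWeight (5 / 8), decayWeight (5 / 8), fun _ ↦ (1 + t)⁻¹]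
  let g : Fin 3 → ℝ → ℝ := ![fun u ↦ 4 * (1 + 4 / κ) * decayWeight (5 / 8) u,
    fun u ↦ 4 * ((√(1 + t))⁻¹ * Real.exp (-(κ / (1 + t)) * (u - ξ) ^ 2)),
    fun u ↦ 8 * ((√(1 + t))⁻¹ * (√u)⁻¹)]
  have hsum := integral_triangle_le_sum_integral_mul_integral (t := t) (f := f) (g := g)
    (h := fun s r ↦ reducedKernel κ ξ t r (s - r)) ?_ ?_ ?_ ?_
    (fun s _ r hr ↦ reducedKernel_nonneg κ ξ t hr.1.le) fun s hs r hr ↦ ?_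
  · simpa only [f, g, Fin.sum_univ_three, Matrix.cons_val] using hsum
  · exact Fin.forall_fin_succ.2
      ⟨hψ_int, Fin.forall_fin_two.2 ⟨hψ_int, integrableOn_const (by simp)⟩⟩
  · exact Fin.forall_fin_succ.2 ⟨hψ_int.const_mul _, Fin.forall_fin_two.2
      ⟨((integrable_inv_sqrt_mul_exp_neg hκ h1t ξ).const_mul _).integrableOn,
        ((integrableOn_inv_sqrt ht).const_mul _).const_mul _⟩⟩
  · exact Fin.forall_fin_succ.2 ⟨hψ_nonneg, Fin.forall_fin_two.2
      ⟨hψ_nonneg, fun _ _ ↦ inv_nonneg.2 h1t.le⟩⟩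
  · exact Fin.forall_fin_succ.2 ⟨fun u hu ↦ mul_nonneg (by positivity) (hψ_nonneg u hu),
      Fin.forall_fin_two.2
        ⟨fun u _ ↦ mul_nonneg zero_le_four (mul_nonneg (by positivity) (Real.exp_nonneg _)),
          fun u _ ↦ mul_nonneg (by norm_num) (mul_nonneg (by positivity) (by positivity))⟩⟩
  · simpa only [f, g, Fin.sum_univ_three, Matrix.cons_val] using
      reducedKernel_le (t := t) hκ ξ hr.1 (sub_pos.2 hr.2) (by linarith [hs.2])

theorem exists_integral_reducedKernel_le {κ : ℝ} (hκ : 0 < κ) :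
    ∃ C, 0 < C ∧ ∀ ξ t, 0 ≤ t →
      ∫ s in Ioo 0 t, ∫ r in Ioo 0 s, reducedKernel κ ξ t r (s - r) ≤ C := by
  set I := ∫ v in Ioi 0, decayWeight (5 / 8) v
  have hI : 0 ≤ I := setIntegral_nonneg measurableSet_Ioi fun v hv ↦
    decayWeight_nonneg _ (le_of_lt hv)
  refine ⟨I * (4 * (1 + 4 / κ) * I) + I * (4 * √(Real.pi / κ)) + 1 * (8 * 2), by positivity,
    fun ξ t ht ↦ (integral_reducedKernel_le_sum hκ ξ ht).trans ?_⟩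
  have hψ_nonneg : 0 ≤ ∫ v in Ioo 0 t, decayWeight (5 / 8) v :=
    setIntegral_nonneg measurableSet_Ioo fun v hv ↦ decayWeight_nonneg _ hv.1.le
  have hψ_le : ∫ v in Ioo 0 t, decayWeight (5 / 8) v ≤ I :=
    setIntegral_decayWeight_le (by norm_num) t
  rw [integral_const_mul, integral_const_mul, integral_const_mul 8]
  gcongr
  · exact setIntegral_inv_sqrt_mul_exp_neg_le hκ (by linarith) ξ (Ioo 0 t)
  · exact integral_inv_one_add_le_one ht
  · exact integral_inv_sqrt_one_add_mul_inv_sqrt_le ht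

theorem mix_exponent_eq {M τ σ : ℝ} (hM : M ≠ 0) (hτ : τ ≠ 0) (hσ : σ ≠ 0) (hτσ : τ + σ ≠ 0)
    (X a z : ℝ) :
    -(2 * (X - z) ^ 2) / (M * τ) - z ^ 2 / (M * σ) - (z - a) ^ 2 / (M * σ) =
      -X ^ 2 / (M * (τ + σ)) + -(a ^ 2 * τ / (2 * M * σ * (τ + σ))) +
        -((X - a) ^ 2 / (M * (τ + σ))) +
        -(2 * (τ + σ) / (M * τ * σ)) * (z - (X * σ + a * τ / 2) / (τ + σ)) ^ 2 := by
  field_simp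
  ring

theorem integral_exp_mix {M τ σ : ℝ} (hM : 0 < M) (hτ : 0 < τ) (hσ : 0 < σ) (X a : ℝ) :
    ∫ z, Real.exp (-(2 * (X - z) ^ 2) / (M * τ) - z ^ 2 / (M * σ) - (z - a) ^ 2 / (M * σ)) =
      √(Real.pi * M / 2) * √τ * √σ / √(τ + σ) * (Real.exp (-X ^ 2 / (M * (τ + σ))) *
        Real.exp (-(a ^ 2 * τ / (2 * M * σ * (τ + σ)))) *
        Real.exp (-((X - a) ^ 2 / (M * (τ + σ))))) := by
  have hτσ : 0 < τ + σ := add_pos hτ hσ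
  simp_rw [mix_exponent_eq hM.ne' hτ.ne' hσ.ne' hτσ.ne', Real.exp_add, integral_const_mul]
  rw [integral_sub_right_eq_self
    (fun z ↦ Real.exp (-(2 * (τ + σ) / (M * τ * σ)) * z ^ 2)), integral_gaussian, mul_comm]
  congr 1
  rw [← Real.sqrt_mul (by positivity), ← Real.sqrt_mul (by positivity),
    ← Real.sqrt_div (by positivity)]
  congr 1
  field_simp

theorem rpow_div_sqrt_add_div_one_add_eq {r : ℝ} (hr : 0 < 1 + r) (u : ℝ) :
    ((1 + r) ^ ((1 : ℝ) / 4) / √r + 1 / √u) / (1 + r) =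
      decayWeight (3 / 4) r + (1 + r)⁻¹ * (√u)⁻¹ := by
  have h : (1 + r) ^ (-(3 / 4) : ℝ) = (1 + r) ^ ((1 : ℝ) / 4) * (1 + r)⁻¹ := by
    rw [← Real.rpow_neg_one, ← Real.rpow_add hr]
    norm_num
  rw [decayWeight, h]
  ring

theorem integral_mix_eq_mul_reducedKernel {M c₁ c₂ s t r : ℝ} (hM : 0 < M) (hc : c₁ ≠ c₂)
    (hs : 0 < s) (hst : s < t) (hr : 0 < r) (x : ℝ) :
    ∫ y, Real.exp (-(2 * (x - y + c₁ * (t - s)) ^ 2) / (M * (t - s)) -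
          (y + c₁ * s) ^ 2 / (M * (1 + s)) -
          (y + c₂ * s + r * (c₁ - c₂)) ^ 2 / (M * (1 + s))) /
        ((1 + s) * √(t - s) * (1 + r)) * ((1 + r) ^ ((1 : ℝ) / 4) / √r + 1 / √(s - r)) =
      √(Real.pi * M / 2) * Real.exp (-(x + c₁ * t) ^ 2 / (M * (1 + t))) / √(1 + t) *
        reducedKernel ((c₁ - c₂) ^ 2 / M) ((x + c₁ * t) / (c₁ - c₂)) t r (s - r) := by
  set X := x + c₁ * t with hX
  set a := (c₁ - c₂) * (s - r) with ha
  have hd : c₁ - c₂ ≠ 0 := sub_ne_zero.2 hc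
  have hτ : 0 < t - s := sub_pos.2 hst
  have hσ : 0 < 1 + s := by linarith
  have hshift (y : ℝ) : x - y + c₁ * (t - s) = X - (y + c₁ * s) ∧
      y + c₂ * s + r * (c₁ - c₂) = y + c₁ * s - a := by
    constructor <;> simp only [hX, ha] <;> ring
  have hgauss := integral_exp_mix hM hτ hσ X a
  rw [show t - s + (1 + s) = 1 + t by ring] at hgauss
  have hκ₁ : a ^ 2 * (t - s) / (2 * M * (1 + s) * (1 + t)) =
      (c₁ - c₂) ^ 2 / M * (s - r) ^ 2 * (t - s) / (2 * (1 + s) * (1 + t)) := by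
    rw [ha]
    field_simp
  have hκ₂ : -((X - a) ^ 2 / (M * (1 + t))) =
      -((c₁ - c₂) ^ 2 / M / (1 + t)) * (s - r - X / (c₁ - c₂)) ^ 2 := by
    rw [ha]
    field_simp
    ring
  have hweight := rpow_div_sqrt_add_div_one_add_eq (r := r) (by linarith) (s - r)
  simp_rw [hshift, integral_mul_const, integral_div]
  rw [integral_add_right_eq_self (fun z ↦ Real.exp (-(2 * (X - z) ^ 2) / (M * (t - s)) -
    z ^ 2 / (M * (1 + s)) - (z - a) ^ 2 / (M * (1 + s)))) (c₁ * s), hgauss, hκ₁, hκ₂,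
    reducedKernel, add_sub_cancel, ← hweight]
  have hτ_sqrt := (Real.sqrt_pos.2 hτ).ne'
  have hσ_inv : (√(1 + s))⁻¹ = √(1 + s) / (1 + s) := by rw [Real.sqrt_div_self', one_div]
  rw [hσ_inv]
  field_simp

/-- Bound on the triple mix-term integral `J₆` (estimate (5.15) of the paper). -/
theorem bound_triple_mix_term_integral
    (M c₁ c₂ : ℝ) (hM : 0 < M) (hc : c₁ ≠ c₂) :
    ∃ C : ℝ, 0 < C ∧ ∀ x t : ℝ, 0 ≤ t →
      (∫ s in Set.Ioo (0 : ℝ) t, ∫ r in Set.Ioo (0 : ℝ) s, ∫ y : ℝ,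
          Real.exp (-(2 * (x - y + c₁ * (t - s)) ^ 2) / (M * (t - s)) -
              (y + c₁ * s) ^ 2 / (M * (1 + s)) -
              (y + c₂ * s + r * (c₁ - c₂)) ^ 2 / (M * (1 + s))) /
            ((1 + s) * Real.sqrt (t - s) * (1 + r)) *
            ((1 + r) ^ ((1 : ℝ) / 4) / Real.sqrt r + 1 / Real.sqrt (s - r))) ≤
        C * Real.exp (-(x + c₁ * t) ^ 2 / (M * (1 + t))) / Real.sqrt (1 + t) := by
  have hκ : 0 < (c₁ - c₂) ^ 2 / M := div_pos (sq_pos_of_ne_zero (sub_ne_zero.2 hc)) hM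
  obtain ⟨C, hC, hle⟩ := exists_integral_reducedKernel_le hκ
  refine ⟨√(Real.pi * M / 2) * C, by positivity, fun x t ht ↦ ?_⟩
  set A := √(Real.pi * M / 2) * Real.exp (-(x + c₁ * t) ^ 2 / (M * (1 + t))) / √(1 + t)
  calc _ = ∫ s in Ioo 0 t, ∫ r in Ioo 0 s,
          A * reducedKernel ((c₁ - c₂) ^ 2 / M) ((x + c₁ * t) / (c₁ - c₂)) t r (s - r) :=
        setIntegral_congr_fun measurableSet_Ioo fun s hs ↦
          setIntegral_congr_fun measurableSet_Ioo fun r hr ↦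
            integral_mix_eq_mul_reducedKernel hM hc hs.1 hs.2 hr.1 x
    _ ≤ A * C := by
        simp_rw [integral_const_mul]
        gcongr
        exact hle _ t ht
    _ = _ := by ring
end
end

section
/- Tail integral bound with velocity-difference decay (inequality (5.8) of the paper). Let a > 0. Then there exists a constant C > 0 such that for every r > 0: ∫_r^∞ exp( −a(s−r)²/(1+s) ) / ( √(1+s) √(s−r) ) ds ≤ C (1+r)^{1/4} / √r. -/
open MeasureTheory Set

noncomputable section

/-!
Put `q = √(1 + r)` and `u = s - r`, so that `1 + s = q² + u`. Since `q ≥ 1`, the Gaussian exponent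
satisfies `u² / (q² + u) ≥ u / q - 1`: up to the factor `exp a`, the integrand decays exponentially
in `u` at the length scale `q`. Bounding the remaining power of `1 + s` by its value at `s = r`
leaves a Gamma integral, which contributes a positive power of `q`.
-/

section Translation

variable {E : Type*} [NormedAddCommGroup E]

theorem integrableOn_Ioi_comp_sub_right_iff (f : ℝ → E) (r : ℝ) :
    IntegrableOn (fun s => f (s - r)) (Ioi r) ↔ IntegrableOn f (Ioi 0) := by
  simpa only [preimage_sub_const_Ioi, zero_add] using!
    (measurePreserving_sub_right volume r).integrableOn_comp_preimage
      (measurableEmbedding_subRight r) (f := f) (s := Ioi 0)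

theorem integral_Ioi_comp_sub_right [NormedSpace ℝ E] (f : ℝ → E) (r : ℝ) :
    ∫ s in Ioi r, f (s - r) = ∫ u in Ioi 0, f u := by
  simpa only [preimage_sub_const_Ioi, zero_add] using
    (measurePreserving_sub_right volume r).setIntegral_preimage_emb
      (measurableEmbedding_subRight r) f (Ioi 0)

end Translation

section ShiftedGamma

open Real

variable {σ b : ℝ}

theorem integrableOn_Ioi_rpow_sub_mul_exp_neg_mul (hσ : 0 < σ) (hb : 0 < b) (r : ℝ) :
    IntegrableOn (fun s => (s - r) ^ (σ - 1) * exp (-(b * (s - r)))) (Ioi r) := by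
  rw [integrableOn_Ioi_comp_sub_right_iff fun u => u ^ (σ - 1) * exp (-(b * u))]
  simpa only [rpow_one, neg_mul] using
    integrableOn_rpow_mul_exp_neg_mul_rpow (by linarith : -1 < σ - 1) one_pos hb

theorem integral_Ioi_rpow_sub_mul_exp_neg_mul (hσ : 0 < σ) (hb : 0 < b) (r : ℝ) :
    ∫ s in Ioi r, (s - r) ^ (σ - 1) * exp (-(b * (s - r))) = (1 / b) ^ σ * Gamma σ := by
  rw [integral_Ioi_comp_sub_right fun u => u ^ (σ - 1) * exp (-(b * u)),
    integral_rpow_mul_exp_neg_mul_Ioi hσ hb]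

end ShiftedGamma

section ExponentialMajorant

open Real

theorem div_sub_one_le_sq_div_sq_add {q u : ℝ} (hq : 1 ≤ q) (hu : 0 ≤ u) :
    u / q - 1 ≤ u ^ 2 / (q ^ 2 + u) := by
  have hq_pos : 0 < q := by linarith
  rw [div_sub_one hq_pos.ne', div_le_div_iff₀ hq_pos (by positivity)]
  have h_square : 0 ≤ (q - 1) * (u - q / 2) ^ 2 := mul_nonneg (by linarith) (sq_nonneg _)
  nlinarith [pow_pos hq_pos 3, pow_pos hq_pos 2]

variable {a σ β r s : ℝ}

theorem exp_neg_mul_sq_div_le (ha : 0 ≤ a) (hr : 0 ≤ r) (hs : r ≤ s) :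
    exp (-(a * (s - r) ^ 2) / (1 + s)) ≤ exp a * exp (-(a / √(1 + r) * (s - r))) := by
  have h_exponent : (s - r) / √(1 + r) - 1 ≤ (s - r) ^ 2 / (1 + s) := by
    have h := div_sub_one_le_sq_div_sq_add (one_le_sqrt.2 (by linarith : 1 ≤ 1 + r))
      (sub_nonneg.2 hs)
    rwa [sq_sqrt (by linarith), show 1 + r + (s - r) = 1 + s by ring] at h
  rw [← exp_add, exp_le_exp]
  calc -(a * (s - r) ^ 2) / (1 + s) = -(a * ((s - r) ^ 2 / (1 + s))) := by ring
    _ ≤ -(a * ((s - r) / √(1 + r) - 1)) := by gcongr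
    _ = a + -(a / √(1 + r) * (s - r)) := by ring

theorem rpow_sub_mul_rpow_neg_mul_exp_le (ha : 0 ≤ a) (hβ : 0 ≤ β) (hr : 0 ≤ r) (hs : r ≤ s) :
    (s - r) ^ (σ - 1) * (1 + s) ^ (-β) * exp (-(a * (s - r) ^ 2) / (1 + s)) ≤
      exp a * (1 + r) ^ (-β) * ((s - r) ^ (σ - 1) * exp (-(a / √(1 + r) * (s - r)))) := by
  have : 0 ≤ (s - r) ^ (σ - 1) := rpow_nonneg (sub_nonneg.2 hs) _
  have h_decay : (1 + s) ^ (-β) ≤ (1 + r) ^ (-β) :=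
    rpow_le_rpow_of_nonpos (by linarith) (by linarith) (by linarith)
  calc (s - r) ^ (σ - 1) * (1 + s) ^ (-β) * exp (-(a * (s - r) ^ 2) / (1 + s))
      ≤ (s - r) ^ (σ - 1) * (1 + r) ^ (-β) * (exp a * exp (-(a / √(1 + r) * (s - r)))) := by
        gcongr
        exact exp_neg_mul_sq_div_le ha hr hs
    _ = _ := by ring

end ExponentialMajorant

section TailIntegral

open Real

variable {a σ β r : ℝ}

theorem integrableOn_Ioi_rpow_sub_mul_rpow_neg_mul_exp (ha : 0 < a) (hσ : 0 < σ) (hβ : 0 ≤ β)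
    (hr : 0 ≤ r) :
    IntegrableOn (fun s => (s - r) ^ (σ - 1) * (1 + s) ^ (-β) *
      exp (-(a * (s - r) ^ 2) / (1 + s))) (Ioi r) := by
  have h_majorant := (integrableOn_Ioi_rpow_sub_mul_exp_neg_mul (b := a / √(1 + r)) hσ
    (by positivity) r).const_mul (exp a * (1 + r) ^ (-β))
  refine h_majorant.mono' (by fun_prop) ?_
  filter_upwards [ae_restrict_mem measurableSet_Ioi] with s hs
  rw [mem_Ioi] at hs
  have : 0 < s - r := sub_pos.2 hs
  have : 0 < 1 + s := by linarith
  rw [norm_of_nonneg (by positivity)]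
  exact rpow_sub_mul_rpow_neg_mul_exp_le ha.le hβ hr hs.le

theorem tail_integral_velocity_difference_general (ha : 0 < a) (hσ : 0 < σ) (hβ : 0 ≤ β)
    (hr : 0 ≤ r) :
    ∫ s in Ioi r, (s - r) ^ (σ - 1) * (1 + s) ^ (-β) * exp (-(a * (s - r) ^ 2) / (1 + s)) ≤
      exp a * (1 / a) ^ σ * Gamma σ * (1 + r) ^ (σ / 2 - β) := by
  have h_rate : 0 < a / √(1 + r) := by positivity
  have h_scale : (1 / (a / √(1 + r))) ^ σ = (1 / a) ^ σ * (1 + r) ^ (σ / 2) := by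
    rw [one_div_div, div_eq_inv_mul, ← one_div, mul_rpow (by positivity) (by positivity),
      sqrt_eq_rpow, ← rpow_mul (by positivity), one_div_mul_eq_div]
  calc ∫ s in Ioi r, (s - r) ^ (σ - 1) * (1 + s) ^ (-β) * exp (-(a * (s - r) ^ 2) / (1 + s))
      ≤ ∫ s in Ioi r, exp a * (1 + r) ^ (-β) *
          ((s - r) ^ (σ - 1) * exp (-(a / √(1 + r) * (s - r)))) :=
        setIntegral_mono_on (integrableOn_Ioi_rpow_sub_mul_rpow_neg_mul_exp ha hσ hβ hr)
          ((integrableOn_Ioi_rpow_sub_mul_exp_neg_mul hσ h_rate r).const_mul _) measurableSet_Ioi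
          fun s hs => rpow_sub_mul_rpow_neg_mul_exp_le ha.le hβ hr (le_of_lt hs)
    _ = exp a * (1 + r) ^ (-β) * ((1 / a) ^ σ * (1 + r) ^ (σ / 2) * Gamma σ) := by
        rw [integral_const_mul, integral_Ioi_rpow_sub_mul_exp_neg_mul hσ h_rate, h_scale]
    _ = exp a * (1 / a) ^ σ * Gamma σ * (1 + r) ^ (σ / 2 - β) := by
        rw [sub_eq_add_neg, rpow_add (by positivity)]
        ring

theorem div_sqrt_mul_sqrt_eq_rpow {x y : ℝ} (hx : 0 ≤ x) (hy : 0 ≤ y) (z : ℝ) :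
    z / (√x * √y) = y ^ ((1 / 2 : ℝ) - 1) * x ^ (-(1 / 2 : ℝ)) * z := by
  rw [show (1 / 2 : ℝ) - 1 = -(1 / 2) by norm_num, rpow_neg hx, rpow_neg hy, ← sqrt_eq_rpow,
    ← sqrt_eq_rpow, div_eq_mul_inv, mul_inv]
  ring

theorem integral_Ioi_div_sqrt_mul_sqrt (hr : -1 ≤ r) (f : ℝ → ℝ) :
    ∫ s in Ioi r, f s / (√(1 + s) * √(s - r)) =
      ∫ s in Ioi r, (s - r) ^ ((1 / 2 : ℝ) - 1) * (1 + s) ^ (-(1 / 2 : ℝ)) * f s :=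
  setIntegral_congr_fun measurableSet_Ioi fun s (hs : r < s) =>
    div_sqrt_mul_sqrt_eq_rpow (by linarith) (sub_nonneg.2 hs.le) (f s)

theorem one_add_rpow_sub_half_le_div_sqrt (p : ℝ) (hr : 0 < r) :
    (1 + r) ^ (p - 1 / 2) ≤ (1 + r) ^ p / √r := by
  rw [rpow_sub (by positivity), ← sqrt_eq_rpow]
  gcongr
  linarith

end TailIntegral

/-- Tail integral bound with velocity-difference decay
(inequality (5.8) of the paper). -/
theorem tail_integral_velocity_difference (a : ℝ) (ha : 0 < a) :
    ∃ C : ℝ, 0 < C ∧ ∀ r : ℝ, 0 < r →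
      (∫ s in Set.Ioi r,
          Real.exp (-(a * (s - r) ^ 2) / (1 + s)) /
            (Real.sqrt (1 + s) * Real.sqrt (s - r))) ≤
        C * (1 + r) ^ ((1 : ℝ) / 4) / Real.sqrt r := by
  refine ⟨Real.exp a * (1 / a) ^ (1 / 2 : ℝ) * Real.Gamma (1 / 2),
    mul_pos (by positivity) (Real.Gamma_pos_of_pos one_half_pos), fun r hr => ?_⟩
  rw [integral_Ioi_div_sqrt_mul_sqrt (by linarith), mul_div_assoc]
  refine (tail_integral_velocity_difference_general ha one_half_pos one_half_pos.le hr.le).trans ?_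
  rw [show (1 / 2 : ℝ) / 2 - 1 / 2 = 1 / 4 - 1 / 2 by norm_num]
  gcongr
  exact one_add_rpow_sub_half_le_div_sqrt _ hr
end
end

section
/- Exact solution exhibiting non-Gaussian decay (Remark 6.1). Let c₁, c₂ ∈ ℝ and define u(x,t) = e^{−(x+c₁t)²/(4(1+t))}/√(4π(1+t)) and v(x,t) = ∫_0^t e^{−(x + t c₂ + s(c₁−c₂))²/(1+t)} / ( 16π² (1+s)^{3/2} √(1+t) ) ds for x ∈ ℝ and t ≥ 0. Then for every x ∈ ℝ and t > 0 the partial derivatives below exist and satisfy ∂_t u(x,t) = ∂_x² u(x,t) + c₁ ∂_x u(x,t) and ∂_t v(x,t) = (1/4) ∂_x² v(x,t) + c₂ ∂_x v(x,t) + u(x,t)⁴; moreover v(x,0) = 0. -/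
/-! A power of a Gaussian is again a Gaussian: `u ^ 4` at time `s` is a multiple of the heat kernel
of diffusivity `1 / 4`. Propagating it from time `s` to time `t` by the second equation only makes
that kernel older and moves its centre, and `v` is the superposition over `s` of these propagated
sources, so it solves the second equation by Duhamel's principle. -/

open MeasureTheory Set

noncomputable section

open Filter Asymptotics
open scoped Topology

section ParametricIntegral

variable {E : Type*} [NormedAddCommGroup E] [NormedSpace ℝ E]

theorem hasDerivAt_intervalIntegral_of_continuousOn {𝕜 : Type*} [RCLike 𝕜] [NormedSpace 𝕜 E]
    {μ : Measure ℝ} [IsLocallyFiniteMeasure μ] {F F' : 𝕜 → ℝ → E} {U : Set 𝕜} {x : 𝕜} {a b : ℝ}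
    (hU : U ∈ 𝓝 x) (hF : ∀ y ∈ U, ContinuousOn (F y) (uIcc a b))
    (hF' : ContinuousOn ↿F' (U ×ˢ uIcc a b))
    (hderiv : ∀ y ∈ U, ∀ s ∈ uIcc a b, HasDerivAt (fun z => F z s) (F' y s) y) :
    HasDerivAt (fun y => ∫ s in a..b, F y s ∂μ) (∫ s in a..b, F' x s ∂μ) x := by
  obtain ⟨δ, hδ, hball⟩ := Metric.nhds_basis_closedBall.mem_iff.1 hU
  obtain ⟨C, hC⟩ := ((isCompact_closedBall x δ).prod isCompact_uIcc).exists_bound_of_continuousOn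
    (hF'.mono (prod_mono hball Subset.rfl))
  have hmeas {f : ℝ → E} (hf : ContinuousOn f (uIcc a b)) :
      AEStronglyMeasurable f (μ.restrict (uIoc a b)) :=
    (hf.mono uIoc_subset_uIcc).aestronglyMeasurable measurableSet_uIoc
  exact (intervalIntegral.hasDerivAt_integral_of_dominated_loc_of_deriv_le (bound := fun _ => C)
    (Metric.closedBall_mem_nhds x hδ) (by filter_upwards [hU] with y hy using hmeas (hF y hy))
    (hF x (mem_of_mem_nhds hU)).intervalIntegrable
    (hmeas (hF'.uncurry_left x (mem_of_mem_nhds hU)))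
    (.of_forall fun s hs y hy => hC (y, s) ⟨hy, uIoc_subset_uIcc hs⟩) intervalIntegrable_const
    (.of_forall fun s hs y hy => hderiv y (hball hy) s (uIoc_subset_uIcc hs))).2

variable {F F' : ℝ → ℝ → E} {U : Set ℝ} {b t : ℝ}

theorem hasDerivAt_intervalIntegral_diagonal [CompleteSpace E]
    (hF : ∀ᶠ z in 𝓝 (t, t), ContinuousAt ↿F z) :
    HasDerivAt (fun τ => ∫ s in t..τ, F τ s) (F t t) t := by
  rw [hasDerivAt_iff_isLittleO, isLittleO_iff]
  intro ε hε
  have hclose : ∀ᶠ z in 𝓝 (t, t), dist (↿F z) (F t t) < ε :=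
    hF.self_of_nhds.eventually (Metric.ball_mem_nhds _ hε)
  obtain ⟨δ, hδ, hball⟩ := Metric.eventually_nhds_iff.1 (hF.and hclose)
  filter_upwards [Metric.ball_mem_nhds t hδ] with τ hτ
  have hnear : ∀ s ∈ uIcc t τ, ContinuousAt ↿F (τ, s) ∧ dist (F τ s) (F t t) < ε := by
    intro s hs
    have hst : dist s t ≤ dist τ t := by
      simpa only [Real.dist_eq] using abs_sub_left_of_mem_uIcc hs
    exact hball (y := (τ, s)) (max_lt hτ (hst.trans_lt hτ))
  have hcont : ContinuousOn (F τ) (uIcc t τ) := fun s hs =>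
    ((hnear s hs).1.comp (f := fun s => (τ, s)) (by fun_prop)).continuousWithinAt
  have hbound : ∀ s ∈ uIoc t τ, ‖F τ s - F t t‖ ≤ ε := fun s hs =>
    (dist_eq_norm (F τ s) _).symm.trans_le (hnear s (uIoc_subset_uIcc hs)).2.le
  calc ‖(∫ s in t..τ, F τ s) - (∫ s in t..t, F t s) - (τ - t) • F t t‖
      = ‖∫ s in t..τ, (F τ s - F t t)‖ := by
        rw [intervalIntegral.integral_sub hcont.intervalIntegrable intervalIntegrable_const,
          intervalIntegral.integral_same, intervalIntegral.integral_const, sub_zero]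
    _ ≤ ε * ‖τ - t‖ := intervalIntegral.norm_integral_le_of_norm_le_const hbound

theorem hasDerivAt_intervalIntegral_leibniz [CompleteSpace E] (hU : IsOpen U) [U.OrdConnected]
    (hb : b ∈ U) (ht : t ∈ U) (hF : ContinuousOn ↿F (U ×ˢ U)) (hF' : ContinuousOn ↿F' (U ×ˢ U))
    (hderiv : ∀ τ ∈ U, ∀ s ∈ U, HasDerivAt (fun z => F z s) (F' τ s) τ) :
    HasDerivAt (fun τ => ∫ s in b..τ, F τ s) ((∫ s in b..t, F' t s) + F t t) t := by
  have hsub {τ σ : ℝ} (hτ : τ ∈ U) (hσ : σ ∈ U) : uIcc τ σ ⊆ U :=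
    ‹U.OrdConnected›.uIcc_subset hτ hσ
  have hcont {τ σ ρ : ℝ} (hτ : τ ∈ U) (hσ : σ ∈ U) (hρ : ρ ∈ U) :
      ContinuousOn (F τ) (uIcc σ ρ) := (hF.uncurry_left τ hτ).mono (hsub hσ hρ)
  have hfixed : HasDerivAt (fun τ => ∫ s in b..t, F τ s) (∫ s in b..t, F' t s) t :=
    hasDerivAt_intervalIntegral_of_continuousOn (hU.mem_nhds ht) (fun τ hτ => hcont hτ hb ht)
      (hF'.mono (prod_mono Subset.rfl (hsub hb ht)))
      fun τ hτ s hs => hderiv τ hτ s (hsub hb ht hs)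
  have hF_near : ∀ᶠ z in 𝓝 (t, t), ContinuousAt ↿F z := by
    filter_upwards [(hU.prod hU).mem_nhds ⟨ht, ht⟩] with z hz
    exact hF.continuousAt ((hU.prod hU).mem_nhds hz)
  refine (hfixed.add (hasDerivAt_intervalIntegral_diagonal hF_near)).congr_of_eventuallyEq ?_
  filter_upwards [hU.mem_nhds ht] with τ hτ
  exact (intervalIntegral.integral_add_adjacent_intervals
    (hcont hτ hb ht).intervalIntegrable (hcont hτ ht hτ).intervalIntegrable).symm

end ParametricIntegral

/-- `w`, a function of position and time, solves `∂ₜw = a ∂ₓ²w + c ∂ₓw + f` in the classical sense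
at `(x, t)`. Differentiability is asserted separately since `deriv` is `0` where there is no
derivative; `f` is the value of the source at `(x, t)`. -/
structure SolvesAdvectionDiffusionAt (a c f : ℝ) (w : ℝ → ℝ → ℝ) (x t : ℝ) : Prop where
  differentiableAt_time : DifferentiableAt ℝ (fun τ => w x τ) t
  differentiableAt_space : DifferentiableAt ℝ (fun ξ => w ξ t) x
  differentiableAt_deriv_space : DifferentiableAt ℝ (deriv fun ξ => w ξ t) x
  deriv_time : deriv (fun τ => w x τ) t =
    a * deriv (deriv fun ξ => w ξ t) x + c * deriv (fun ξ => w ξ t) x + f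

namespace SolvesAdvectionDiffusionAt

variable {a c f x t : ℝ}

theorem of_hasDerivAt {w : ℝ → ℝ → ℝ} {p : ℝ → ℝ} {q : ℝ}
    (hspace : ∀ ξ, HasDerivAt (fun ξ => w ξ t) (p ξ) ξ) (hspace₂ : HasDerivAt p q x)
    (htime : HasDerivAt (fun τ => w x τ) (a * q + c * p x + f) t) :
    SolvesAdvectionDiffusionAt a c f w x t := by
  have hp : (deriv fun ξ => w ξ t) = p := funext fun ξ => (hspace ξ).deriv
  refine ⟨htime.differentiableAt, (hspace x).differentiableAt, ?_, ?_⟩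
  · rw [hp]
    exact hspace₂.differentiableAt
  · rw [hp, htime.deriv, hspace₂.deriv]

theorem congr {w₁ w₂ : ℝ → ℝ → ℝ} (h : SolvesAdvectionDiffusionAt a c f w₁ x t)
    (heq : ∀ᶠ τ in 𝓝 t, ∀ ξ, w₂ ξ τ = w₁ ξ τ) : SolvesAdvectionDiffusionAt a c f w₂ x t := by
  have hspace : (fun ξ => w₂ ξ t) = fun ξ => w₁ ξ t := funext heq.self_of_nhds
  have htime : (fun τ => w₂ x τ) =ᶠ[𝓝 t] fun τ => w₁ x τ := heq.mono fun τ hτ => hτ x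
  refine ⟨h.differentiableAt_time.congr_of_eventuallyEq htime, ?_, ?_, ?_⟩
  · exact hspace ▸ h.differentiableAt_space
  · exact hspace ▸ h.differentiableAt_deriv_space
  · rw [htime.deriv_eq, hspace, h.deriv_time]

/-- `g · · s` is the source released at time `s`, propagated by the homogeneous equation. -/
theorem duhamel {g p q : ℝ → ℝ → ℝ → ℝ} {T : Set ℝ} {b : ℝ} (hT : IsOpen T) [T.OrdConnected]
    (hb : b ∈ T) (ht : t ∈ T) (hg : ContinuousOn ↿g (univ ×ˢ T ×ˢ T))
    (hp : ContinuousOn ↿p (univ ×ˢ T ×ˢ T)) (hq : ContinuousOn ↿q (univ ×ˢ T ×ˢ T))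
    (hspace : ∀ ξ, ∀ s ∈ T, HasDerivAt (fun ξ => g ξ t s) (p ξ t s) ξ)
    (hspace₂ : ∀ ξ, ∀ s ∈ T, HasDerivAt (fun ξ => p ξ t s) (q ξ t s) ξ)
    (htime : ∀ τ ∈ T, ∀ s ∈ T,
      HasDerivAt (fun τ => g x τ s) (a * q x τ s + c * p x τ s) τ) :
    SolvesAdvectionDiffusionAt a c (g x t t) (fun ξ τ => ∫ s in b..τ, g ξ τ s) x t := by
  have hsub : uIcc b t ⊆ T := ‹T.OrdConnected›.uIcc_subset hb ht
  have fix_time {h : ℝ → ℝ → ℝ → ℝ} (hh : ContinuousOn ↿h (univ ×ˢ T ×ˢ T)) :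
      ContinuousOn ↿(fun ξ s => h ξ t s) (univ ×ˢ uIcc b t) :=
    hh.comp (f := fun z : ℝ × ℝ => (z.1, t, z.2)) (by fun_prop)
      fun z hz => ⟨hz.1, ht, hsub hz.2⟩
  have fix_space {h : ℝ → ℝ → ℝ → ℝ} (hh : ContinuousOn ↿h (univ ×ˢ T ×ˢ T)) :
      ContinuousOn ↿(h x) (T ×ˢ T) :=
    hh.comp (f := fun z : ℝ × ℝ => (x, z)) (by fun_prop) fun z hz => ⟨mem_univ x, hz⟩
  have slice {h : ℝ → ℝ → ℝ → ℝ} (hh : ContinuousOn ↿h (univ ×ˢ T ×ˢ T)) (ξ : ℝ) :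
      ContinuousOn (h ξ t) (uIcc b t) :=
    (fix_time hh).uncurry_left (f := fun ξ s => h ξ t s) ξ (mem_univ ξ)
  have hderiv {h h' : ℝ → ℝ → ℝ → ℝ} (hh : ContinuousOn ↿h (univ ×ˢ T ×ˢ T))
      (hh' : ContinuousOn ↿h' (univ ×ˢ T ×ˢ T))
      (hd : ∀ ξ, ∀ s ∈ T, HasDerivAt (fun ξ => h ξ t s) (h' ξ t s) ξ) (ξ : ℝ) :
      HasDerivAt (fun ξ => ∫ s in b..t, h ξ t s) (∫ s in b..t, h' ξ t s) ξ :=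
    hasDerivAt_intervalIntegral_of_continuousOn univ_mem (fun ξ _ => slice hh ξ) (fix_time hh')
      fun ξ _ s hs => hd ξ s (hsub hs)
  refine of_hasDerivAt (hderiv hg hp hspace) (hderiv hp hq hspace₂ x) ?_
  refine (hasDerivAt_intervalIntegral_leibniz (F' := fun τ s => a * q x τ s + c * p x τ s)
    hT hb ht (fix_space hg) (((fix_space hq).const_mul a).add ((fix_space hp).const_mul c))
    htime).congr_deriv ?_
  rw [intervalIntegral.integral_add ((slice hq x).intervalIntegrable.const_mul a)
    ((slice hp x).intervalIntegrable.const_mul c), intervalIntegral.integral_const_mul,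
    intervalIntegral.integral_const_mul]

end SolvesAdvectionDiffusionAt

/-- The heat kernel on `ℝ`, i.e. the fundamental solution of `∂ᵣK = a ∂ᵧ²K`, at position `y` and
time `r > 0`. -/
def heatKernel (a y r : ℝ) : ℝ :=
  Real.exp (-y ^ 2 / (4 * a * r)) / √(4 * Real.pi * a * r)

/-- The first derivative of the heat kernel in the position, in closed form. -/
def heatKernelDeriv (a y r : ℝ) : ℝ :=
  -(y / (2 * a * r)) * heatKernel a y r

/-- The second derivative of the heat kernel in the position, in closed form. -/
def heatKernelDeriv₂ (a y r : ℝ) : ℝ :=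
  ((y / (2 * a * r)) ^ 2 - 1 / (2 * a * r)) * heatKernel a y r

section HeatKernel

variable {a : ℝ}

theorem heatKernel_pow_succ (a y r : ℝ) (n : ℕ) :
    heatKernel a y r ^ (n + 1) =
      (√(n + 1) * √(4 * Real.pi * a * r) ^ n)⁻¹ * heatKernel (a / (n + 1)) y r := by
  have hn : (0 : ℝ) < n + 1 := by positivity
  have hexp : Real.exp (-y ^ 2 / (4 * (a / (n + 1)) * r)) =
      Real.exp (-y ^ 2 / (4 * a * r)) ^ (n + 1) := by
    rw [← Real.exp_nat_mul]
    congr 1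
    push_cast
    field_simp
  have hsqrt : √(4 * Real.pi * (a / (n + 1)) * r) = √(4 * Real.pi * a * r) / √(n + 1) := by
    rw [← Real.sqrt_div' _ hn.le]
    congr 1
    ring
  have hn' : √((n : ℝ) + 1) ≠ 0 := (Real.sqrt_pos.2 hn).ne'
  rw [heatKernel, heatKernel, hexp, hsqrt, div_pow]
  field_simp
  rw [pow_succ]

/-- The heat equation enters as `a * heatKernelDeriv₂` standing in place of a time derivative. -/
theorem hasDerivAt_heatKernel_comp (ha : 0 < a) {y r : ℝ → ℝ} {y' r' t : ℝ} (hr₀ : 0 < r t)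
    (hy : HasDerivAt y y' t) (hr : HasDerivAt r r' t) :
    HasDerivAt (fun τ => heatKernel a (y τ) (r τ))
      (r' * (a * heatKernelDeriv₂ a (y t) (r t)) + y' * heatKernelDeriv a (y t) (r t)) t := by
  have hpos : 0 < 4 * Real.pi * a * r t := by positivity
  have hsqrt : √(4 * Real.pi * a * r t) ^ 2 = 4 * Real.pi * a * r t := Real.sq_sqrt hpos.le
  have hsqrt_pos : 0 < √(4 * Real.pi * a * r t) := Real.sqrt_pos.2 hpos
  refine ((((hy.fun_pow 2).fun_neg.fun_div (hr.const_mul (4 * a)) (by positivity)).exp).fun_div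
    ((hr.const_mul (4 * Real.pi * a)).sqrt hpos.ne') hsqrt_pos.ne').congr_deriv ?_
  simp only [heatKernelDeriv, heatKernelDeriv₂, heatKernel]
  generalize √(4 * Real.pi * a * r t) = R at *
  field_simp
  rw [hsqrt]
  push_cast
  ring

theorem hasDerivAt_heatKernel (ha : 0 < a) {r : ℝ} (hr : 0 < r) (y : ℝ) :
    HasDerivAt (fun η => heatKernel a η r) (heatKernelDeriv a y r) y := by
  simpa using hasDerivAt_heatKernel_comp ha hr (hasDerivAt_id y) (hasDerivAt_const y r)

theorem hasDerivAt_heatKernelDeriv (ha : 0 < a) {r : ℝ} (hr : 0 < r) (y : ℝ) :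
    HasDerivAt (fun η => heatKernelDeriv a η r) (heatKernelDeriv₂ a y r) y := by
  refine (((hasDerivAt_id y).div_const (2 * a * r)).fun_neg.fun_mul
    (hasDerivAt_heatKernel ha hr y)).congr_deriv ?_
  simp only [heatKernelDeriv, heatKernelDeriv₂, id]
  ring

theorem continuousOn_heatKernel (ha : 0 < a) :
    ContinuousOn ↿(heatKernel a) (univ ×ˢ Ioi 0) := by
  rintro ⟨y, r⟩ ⟨-, hr : 0 < r⟩
  have hsqrt : √(4 * Real.pi * a * r) ≠ 0 := by positivity
  have hden : 4 * a * r ≠ 0 := by positivity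
  simp only [Function.HasUncurry.uncurry, id, heatKernel]
  fun_prop (disch := assumption)

theorem continuousOn_heatKernelDeriv (ha : 0 < a) :
    ContinuousOn ↿(heatKernelDeriv a) (univ ×ˢ Ioi 0) := by
  refine ContinuousOn.mul ?_ (continuousOn_heatKernel ha)
  rintro ⟨y, r⟩ ⟨-, hr : 0 < r⟩
  have hden : 2 * a * r ≠ 0 := by positivity
  fun_prop (disch := assumption)

theorem continuousOn_heatKernelDeriv₂ (ha : 0 < a) :
    ContinuousOn ↿(heatKernelDeriv₂ a) (univ ×ˢ Ioi 0) := by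
  refine ContinuousOn.mul ?_ (continuousOn_heatKernel ha)
  rintro ⟨y, r⟩ ⟨-, hr : 0 < r⟩
  have hden : 2 * a * r ≠ 0 := by positivity
  fun_prop (disch := assumption)

theorem solvesAdvectionDiffusionAt_heatKernel (ha : 0 < a) (c : ℝ) {r₀ t : ℝ} (ht : 0 < r₀ + t)
    (x : ℝ) :
    SolvesAdvectionDiffusionAt a c 0 (fun ξ τ => heatKernel a (ξ + c * τ) (r₀ + τ)) x t := by
  refine .of_hasDerivAt (fun ξ => (hasDerivAt_heatKernel ha ht _).comp_add_const ξ (c * t))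
    ((hasDerivAt_heatKernelDeriv ha ht _).comp_add_const x (c * t)) ?_
  have hcenter : HasDerivAt (fun τ => x + c * τ) c t := by
    simpa using ((hasDerivAt_id t).const_mul c).const_add x
  simpa using hasDerivAt_heatKernel_comp ha ht hcenter ((hasDerivAt_id t).const_add r₀)

theorem solvesAdvectionDiffusionAt_integral_heatKernel (ha : 0 < a) {k : ℝ → ℝ} {r₀ b t : ℝ}
    (hk : ContinuousOn k (Ioi (-r₀))) (hb : -r₀ < b) (ht : -r₀ < t) (c d x : ℝ) :
    SolvesAdvectionDiffusionAt a c (k t * heatKernel a (x + t * c + t * d) (r₀ + t))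
      (fun ξ τ => ∫ s in b..τ, k s * heatKernel a (ξ + τ * c + s * d) (r₀ + τ)) x t := by
  have hage {τ : ℝ} (hτ : -r₀ < τ) : 0 < r₀ + τ := by linarith
  have hcont {K : ℝ → ℝ → ℝ} (hK : ContinuousOn ↿K (univ ×ˢ Ioi 0)) :
      ContinuousOn ↿(fun ξ τ s => k s * K (ξ + τ * c + s * d) (r₀ + τ))
        (univ ×ˢ Ioi (-r₀) ×ˢ Ioi (-r₀)) :=
    (hk.comp (by fun_prop) fun z hz => hz.2.2).mul
      (hK.comp (f := fun z : ℝ × ℝ × ℝ => (z.1 + z.2.1 * c + z.2.2 * d, r₀ + z.2.1))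
        (by fun_prop) fun z hz => ⟨mem_univ _, hage hz.2.1⟩)
  refine .duhamel isOpen_Ioi hb ht (hcont (continuousOn_heatKernel ha))
    (hcont (continuousOn_heatKernelDeriv ha)) (hcont (continuousOn_heatKernelDeriv₂ ha))
    (fun ξ s _ => ?_) (fun ξ s _ => ?_) (fun τ hτ s _ => ?_)
  · simpa only [add_assoc] using
      ((hasDerivAt_heatKernel ha (hage ht) _).comp_add_const ξ (t * c + s * d)).const_mul (k s)
  · simpa only [add_assoc] using
      ((hasDerivAt_heatKernelDeriv ha (hage ht) _).comp_add_const ξ (t * c + s * d)).const_mul (k s)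
  · have hcenter : HasDerivAt (fun τ => x + τ * c + s * d) c τ := by
      simpa using (((hasDerivAt_id τ).mul_const c).const_add x).add_const (s * d)
    refine ((hasDerivAt_heatKernel_comp ha (hage hτ) hcenter
      ((hasDerivAt_id τ).const_add r₀)).const_mul (k s)).congr_deriv ?_
    ring

end HeatKernel

/-- The factor in `heatKernel 1 y (1 + s) ^ 4 = sourceWeight s * heatKernel (1 / 4) y (1 + s)`, that
is, the mass at time `s` of the source `u ^ 4`. -/
def sourceWeight (s : ℝ) : ℝ :=
  (2 * √(4 * Real.pi * (1 + s)) ^ 3)⁻¹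

theorem heatKernel_one_pow_four (y s : ℝ) :
    heatKernel 1 y (1 + s) ^ 4 = sourceWeight s * heatKernel (1 / 4) y (1 + s) := by
  have hsqrt : √((3 : ℕ) + 1 : ℝ) = 2 := by
    rw [Real.sqrt_eq_iff_mul_self_eq_of_pos two_pos]
    norm_num
  have hdiv : (1 : ℝ) / ((3 : ℕ) + 1) = 1 / 4 := by norm_num
  rw [heatKernel_pow_succ 1 y (1 + s) 3, hsqrt, hdiv, mul_one, sourceWeight]

theorem continuousOn_sourceWeight : ContinuousOn sourceWeight (Ioi (-1)) := by
  intro s hs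
  have hpos : 0 < 1 + s := by linarith [mem_Ioi.1 hs]
  have hden : 2 * √(4 * Real.pi * (1 + s)) ^ 3 ≠ 0 := by positivity
  unfold sourceWeight
  fun_prop (disch := assumption)

theorem sourceWeight_mul_heatKernel {s : ℝ} (hs : 0 ≤ 1 + s) (y r : ℝ) :
    sourceWeight s * heatKernel (1 / 4) y r =
      Real.exp (-y ^ 2 / r) / (16 * Real.pi ^ 2 * (1 + s) ^ ((3 : ℝ) / 2) * √r) := by
  have hrpow : (1 + s) ^ ((3 : ℝ) / 2) = √(1 + s) ^ 3 := by
    rw [Real.sqrt_eq_rpow, ← Real.rpow_mul_natCast hs]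
    norm_num
  have hsource : √(4 * Real.pi * (1 + s)) = 2 * √Real.pi * √(1 + s) := by
    rw [show 4 * Real.pi * (1 + s) = 2 ^ 2 * Real.pi * (1 + s) by norm_num,
      Real.sqrt_mul (by positivity), Real.sqrt_mul (by positivity), Real.sqrt_sq two_pos.le]
  have hkernel : √(4 * Real.pi * (1 / 4) * r) = √Real.pi * √r := by
    rw [← Real.sqrt_mul Real.pi_nonneg]
    congr 1
    ring
  have hpi : Real.pi ^ 2 = √Real.pi ^ 4 := by
    rw [show √Real.pi ^ 4 = (√Real.pi ^ 2) ^ 2 by ring, Real.sq_sqrt Real.pi_nonneg]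
  rw [sourceWeight, heatKernel, hrpow, hsource, hkernel, hpi, inv_mul_eq_div, div_div,
    show 4 * (1 / 4) * r = r by ring]
  ring

/-- Exact solution exhibiting non-Gaussian decay (Remark 6.1 of the paper):
`u(x,t) = e^{−(x+c₁t)²/(4(1+t))}/√(4π(1+t))` and
`v(x,t) = ∫_0^t e^{−(x+tc₂+s(c₁−c₂))²/(1+t)}/(16π²(1+s)^{3/2}√(1+t)) ds`
solve `u_t = u_xx + c₁ u_x`, `v_t = (1/4) v_xx + c₂ v_x + u⁴`, with `v(·,0) = 0`. -/
theorem exact_solution_non_gaussian_decay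
    (c₁ c₂ : ℝ) (u v : ℝ → ℝ → ℝ)
    (hu : u = fun x t =>
      Real.exp (-(x + c₁ * t) ^ 2 / (4 * (1 + t))) / Real.sqrt (4 * Real.pi * (1 + t)))
    (hv : v = fun x t => ∫ s in Set.Ioo (0 : ℝ) t,
      Real.exp (-(x + t * c₂ + s * (c₁ - c₂)) ^ 2 / (1 + t)) /
        (16 * Real.pi ^ 2 * (1 + s) ^ ((3 : ℝ) / 2) * Real.sqrt (1 + t))) :
    (∀ x : ℝ, v x 0 = 0) ∧
    ∀ x t : ℝ, 0 < t →
      DifferentiableAt ℝ (fun τ => u x τ) t ∧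
      DifferentiableAt ℝ (fun ξ => u ξ t) x ∧
      DifferentiableAt ℝ (deriv fun ξ => u ξ t) x ∧
      DifferentiableAt ℝ (fun τ => v x τ) t ∧
      DifferentiableAt ℝ (fun ξ => v ξ t) x ∧
      DifferentiableAt ℝ (deriv fun ξ => v ξ t) x ∧
      deriv (fun τ => u x τ) t =
        deriv (deriv fun ξ => u ξ t) x + c₁ * deriv (fun ξ => u ξ t) x ∧
      deriv (fun τ => v x τ) t =
        (1 / 4) * deriv (deriv fun ξ => v ξ t) x + c₂ * deriv (fun ξ => v ξ t) x +
          (u x t) ^ 4 := by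
  have hu' : u = fun x t => heatKernel 1 (x + c₁ * t) (1 + t) := by
    simp only [hu, heatKernel, mul_one]
  have hv' {x t : ℝ} (ht : 0 ≤ t) : v x t = ∫ s in (0 : ℝ)..t,
      sourceWeight s * heatKernel (1 / 4) (x + t * c₂ + s * (c₁ - c₂)) (1 + t) := by
    rw [hv, intervalIntegral.integral_of_le ht, integral_Ioc_eq_integral_Ioo]
    refine setIntegral_congr_fun measurableSet_Ioo fun s hs => ?_
    exact (sourceWeight_mul_heatKernel (by linarith [hs.1]) _ _).symm
  refine ⟨fun x => by simp [hv], fun x t ht => ?_⟩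
  have hu_sol : SolvesAdvectionDiffusionAt 1 c₁ 0 u x t :=
    hu' ▸ solvesAdvectionDiffusionAt_heatKernel one_pos c₁ (by linarith) x
  have hv_sol : SolvesAdvectionDiffusionAt (1 / 4) c₂ (u x t ^ 4) v x t := by
    have hsource : u x t ^ 4 =
        sourceWeight t * heatKernel (1 / 4) (x + t * c₂ + t * (c₁ - c₂)) (1 + t) := by
      rw [hu', heatKernel_one_pow_four, show x + c₁ * t = x + t * c₂ + t * (c₁ - c₂) by ring]
    rw [hsource]
    refine (solvesAdvectionDiffusionAt_integral_heatKernel (by norm_num)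
      continuousOn_sourceWeight neg_one_lt_zero (by linarith) c₂ (c₁ - c₂) x).congr ?_
    filter_upwards [lt_mem_nhds ht] with τ hτ ξ using hv' hτ.le
  exact ⟨hu_sol.1, hu_sol.2, hu_sol.3, hv_sol.1, hv_sol.2, hv_sol.3,
    by simpa using hu_sol.deriv_time, hv_sol.deriv_time⟩
end
end
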